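/- arXiv:2201.03660 — 2 statements merged into one kernel-verified Lean document; each statement's English description precedes it below -/
import Mathlib

section
/- For every finite subgroup G of the special orthogonal group SO(4) acting freely on the unit sphere S³ ⊂ ℝ⁴, there exists a nonzero G-invariant harmonic polynomial on ℝ⁴, homogeneous of degree d with 1 ≤ d ≤ 12. (Equivalently, the first nonzero eigenvalue of the scalar Laplacian on any smooth quotient S³/G is at most 12·(12 + 3 − 1) = 168.) -/
/-!
Identify `ℝ⁴` with the quaternions. By Cartan–Dieudonné every isometry is `x ↦ l x r̄` or `x ↦ l x̄ r̄`
with unit `l`, `r` (`isometry_eq_mul`); the second kind fixes a nonzero vector, so every `g ∈ G` is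
`x ↦ l x r̄`. Conjugation by `l` and by `r` gives two homomorphisms `α`, `β` from `G` to the
rotations of the sphere of pure unit quaternions (`PureUnit`). If `α g` and `β g` were both
half-turns, `l` and `r` would be pure, hence conjugate, and `g` would fix a nonzero vector. So no
element of `G` is a half-turn on both sides, and a group-theoretic argument (`common_axis`) shows
that one of the two actions, say `α`, fixes a point `e`. Then the Hopf map `x ↦ x̄ e x`, which is
quadratic, intertwines the action of `G` on `ℝ⁴` with the rotation action `β`.

The class equation for finite rotation groups shows that `β(G)` has an axis `±v` with at most six
conjugates (`exists_index_le_six`). Let `Q` be the quadratic form `x ↦ ⟨x̄ e x, v⟩` and let `p` be the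
sum of the `G`-translates of `Q ^ 6`, an invariant of degree twelve. If `p` were a multiple of
`|x|¹²`, the function `y ↦ Σ ⟨β(g) y, v⟩⁶` on the sphere would be constant. The mean value of
`⟨y, u⟩⁶` over the sphere is `1 / 7` (`exists_cubature`), so the constant would be `|G| / 7`; but the
elements preserving the axis of `v` already contribute at least `|G| / 6` at `y = v`
(`exists_degree_twelve`).

Finally, the Laplacian commutes with `G` and maps `|x|^(2k+2)` to a positive multiple of `|x|^(2k)`.
Applying it repeatedly to `p` until the result is a multiple of a power of `|x|²`, and correcting
the last polynomial before that, yields the harmonic invariant (`exists_harmonic`).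
-/

open MvPolynomial

/-- The Laplacian `Σ ∂²p/∂xᵢ²` of a polynomial in finitely many real variables. -/
noncomputable def polyLap {σ : Type*} [Fintype σ] (p : MvPolynomial σ ℝ) : MvPolynomial σ ℝ :=
  ∑ i, MvPolynomial.pderiv i (MvPolynomial.pderiv i p)

/-- A polynomial is harmonic if its Laplacian vanishes identically. -/
def IsHarmonic {σ : Type*} [Fintype σ] (p : MvPolynomial σ ℝ) : Prop := polyLap p = 0

/-- The substitution `x ↦ g·x` on polynomials: the variable `xᵢ` is replaced by
`Σⱼ gᵢⱼ xⱼ`, so that `(aeval (matSub g) p)(x) = p(g·x)`. -/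
noncomputable def matSub {m : ℕ} (g : Matrix (Fin m) (Fin m) ℝ) :
    Fin m → MvPolynomial (Fin m) ℝ :=
  fun i => ∑ j, MvPolynomial.C (g i j) * MvPolynomial.X j

/-! ### Finite groups of rotations -/

/-- Combinatorial abstraction of a finite group of rotations acting on the unit sphere of `ℝ³`:
the action commutes with the antipodal map, and each non-identity element fixes exactly the two
points `±v` of some axis. -/
structure IsRotationAction (Γ X : Type*) [Group Γ] [MulAction Γ X] [InvolutiveNeg X] : Prop where
  smul_neg : ∀ (g : Γ) (x : X), g • (-x) = -(g • x)
  neg_ne : ∀ x : X, -x ≠ x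
  pole : ∀ g : Γ, g ≠ 1 → ∃ v : X, g • v = v ∧ ∀ u, g • u = u → u = v ∨ u = -v

namespace IsRotationAction

variable {Γ X : Type*} [Group Γ] [MulAction Γ X] [InvolutiveNeg X]

/-- The subgroup of elements preserving the axis `{v, -v}`. -/
def axisStab (h : IsRotationAction Γ X) (v : X) : Subgroup Γ where
  carrier := {g | g • v = v ∨ g • v = -v}
  one_mem' := by simp
  mul_mem' := by
    rintro a b (ha | ha) (hb | hb) <;> simp [mul_smul, ha, hb, h.smul_neg]
  inv_mem' := by
    rintro a (ha | ha)
    · left; rw [inv_smul_eq_iff, ha]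
    · right; rw [inv_smul_eq_iff, h.smul_neg, ha, neg_neg]

theorem mem_axisStab (h : IsRotationAction Γ X) (v : X) (g : Γ) :
    g ∈ h.axisStab v ↔ g • v = v ∨ g • v = -v := Iff.rfl

theorem fix_neg (h : IsRotationAction Γ X) {g : Γ} {v : X} (hg : g • v = v) :
    g • (-v) = -v := by rw [h.smul_neg, hg]

/-- The fixed points of a non-identity element form a single antipodal pair. -/
theorem fix_unique (h : IsRotationAction Γ X) {g : Γ} (hg : g ≠ 1) {u v : X}
    (hu : g • u = u) (hv : g • v = v) : u = v ∨ u = -v := by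
  obtain ⟨w, _, hw⟩ := h.pole g hg
  rcases hw u hu with rfl | rfl <;> rcases hw v hv with rfl | rfl <;> simp

/-- A rotation reversing an axis is a half-turn. -/
theorem sq_eq_one_of_flip (h : IsRotationAction Γ X) {g : Γ} {v : X} (hg : g • v = -v) :
    g ≠ 1 ∧ g * g = 1 := by
  have h1 : g ≠ 1 := by
    rintro rfl
    rw [one_smul] at hg
    exact h.neg_ne v hg.symm
  refine ⟨h1, ?_⟩
  by_contra h2
  obtain ⟨u, hu, _⟩ := h.pole g h1
  have hv2 : (g * g) • v = v := by rw [mul_smul, hg, h.smul_neg, hg, neg_neg]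
  have hu2 : (g * g) • u = u := by rw [mul_smul, hu, hu]
  rcases h.fix_unique h2 hv2 hu2 with rfl | rfl
  · rw [hu] at hg; exact h.neg_ne _ hg.symm
  · rw [h.fix_neg hu] at hg; exact h.neg_ne _ hg.symm

/-- The stabilizer of an axis is the stabilizer of the pole, or twice as large if some element
exchanges the two poles. -/
theorem card_axisStab [Finite Γ] (h : IsRotationAction Γ X) (v : X) :
    ((∀ g : Γ, g • v ≠ -v) ∧ Nat.card (h.axisStab v) = Nat.card (MulAction.stabilizer Γ v)) ∨
      ((∃ g : Γ, g • v = -v) ∧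
        Nat.card (h.axisStab v) = 2 * Nat.card (MulAction.stabilizer Γ v)) := by
  classical
  have := Fintype.ofFinite Γ
  by_cases hw : ∃ w : Γ, w • v = -v
  · right
    refine ⟨hw, ?_⟩
    obtain ⟨w, hw⟩ := hw
    have e1 : Nat.card (h.axisStab v)
        = (Finset.univ.filter fun g : Γ => g • v = v ∨ g • v = -v).card := by
      rw [Nat.card_eq_fintype_card, Fintype.card_subtype]
      simp only [mem_axisStab]
    have e2 : Nat.card (MulAction.stabilizer Γ v)
        = (Finset.univ.filter fun g : Γ => g • v = v).card := by
      rw [Nat.card_eq_fintype_card, Fintype.card_subtype]; rfl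
    have e3 : (Finset.univ.filter fun g : Γ => g • v = -v).card
        = (Finset.univ.filter fun g : Γ => g • v = v).card := by
      refine Finset.card_nbij' (fun g => w⁻¹ * g) (fun g => w * g) ?_ ?_ ?_ ?_
      · intro g hg
        simp only [Finset.coe_filter, Finset.mem_univ, true_and, Set.mem_ofPred_eq] at hg ⊢
        rw [mul_smul, inv_smul_eq_iff, hg, hw]
      · intro g hg
        simp only [Finset.coe_filter, Finset.mem_univ, true_and, Set.mem_ofPred_eq] at hg ⊢
        rw [mul_smul, hg, hw]
      · intro g _; simp
      · intro g _; simp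
    rw [e1, e2, Finset.filter_or, Finset.card_union_of_disjoint, e3, two_mul]
    rw [Finset.disjoint_filter]
    intro g _ h1 h2
    exact h.neg_ne v (h2.symm.trans h1)
  · left
    push Not at hw
    refine ⟨hw, ?_⟩
    congr 1
    have : h.axisStab v = MulAction.stabilizer Γ v := by
      ext g
      rw [mem_axisStab, MulAction.mem_stabilizer_iff]
      simp [hw g]
    rw [this]

open Classical in
/-- The non-identity elements whose axis is conjugate to the axis of `v`. -/
noncomputable def conjAxis [Fintype Γ] (v : X) : Finset Γ :=
  Finset.univ.filter fun g => g ≠ 1 ∧ ∃ k : Γ, g • k • v = k • v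

theorem mem_conjAxis [Fintype Γ] {v : X} {g : Γ} :
    g ∈ conjAxis v ↔ g ≠ 1 ∧ ∃ k : Γ, g • k • v = k • v := by
  simp [conjAxis]

/-- Double count of the pairs `(g, k)` with `1 ≠ g` fixing `k • v`. -/
theorem card_conjAxis [Fintype Γ] (h : IsRotationAction Γ X) (v : X) :
    (conjAxis (Γ := Γ) v).card * Nat.card (h.axisStab v)
      = Nat.card Γ * (Nat.card (MulAction.stabilizer Γ v) - 1) := by
  classical
  have key := Finset.sum_card_bipartiteAbove_eq_sum_card_bipartiteBelow
    (s := conjAxis (Γ := Γ) v) (t := (Finset.univ : Finset Γ)) (fun g k => g • k • v = k • v)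
  have hA : ∀ g ∈ conjAxis (Γ := Γ) v,
      (Finset.univ.bipartiteAbove (fun g k : Γ => g • k • v = k • v) g).card
        = Nat.card (h.axisStab v) := by
    intro g hg
    obtain ⟨h1, k0, hk0⟩ := mem_conjAxis.1 hg
    rw [Nat.card_eq_fintype_card, Fintype.card_subtype]
    refine Finset.card_nbij' (fun k => k0⁻¹ * k) (fun k => k0 * k) ?_ ?_ ?_ ?_
    · intro k hk
      simp only [Finset.bipartiteAbove, Finset.coe_filter, Finset.mem_univ, true_and,
        Set.mem_ofPred_eq] at hk ⊢
      rw [mem_axisStab, mul_smul, inv_smul_eq_iff, inv_smul_eq_iff, h.smul_neg]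
      exact h.fix_unique h1 hk hk0
    · intro k hk
      simp only [Finset.bipartiteAbove, Finset.coe_filter, Finset.mem_univ, true_and,
        Set.mem_ofPred_eq, mem_axisStab] at hk ⊢
      rcases hk with hk | hk
      · rw [mul_smul, hk, hk0]
      · rw [mul_smul, hk, h.smul_neg, h.smul_neg, hk0]
    · intro g _; simp
    · intro g _; simp
  have hB : ∀ k ∈ (Finset.univ : Finset Γ),
      ((conjAxis (Γ := Γ) v).bipartiteBelow (fun g k : Γ => g • k • v = k • v) k).card
        = Nat.card (MulAction.stabilizer Γ v) - 1 := by
    intro k _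
    have : Nat.card (MulAction.stabilizer Γ v) - 1
        = ((Finset.univ.filter fun g : Γ => g • v = v).erase 1).card := by
      rw [Finset.card_erase_of_mem (by simp), Nat.card_eq_fintype_card, Fintype.card_subtype]
      rfl
    rw [this]
    refine Finset.card_nbij' (fun g => k⁻¹ * g * k) (fun g => k * g * k⁻¹) ?_ ?_ ?_ ?_
    · intro g hg
      simp only [Finset.bipartiteBelow, Finset.coe_filter, Set.mem_ofPred_eq, mem_conjAxis,
        Finset.coe_erase, Finset.mem_univ, true_and, Set.mem_sdiff, Set.mem_singleton_iff] at hg ⊢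
      refine ⟨?_, ?_⟩
      · rw [mul_smul, mul_smul, inv_smul_eq_iff, hg.2]
      · intro h1
        apply hg.1.1
        have := congrArg (fun z => k * z * k⁻¹) h1
        simpa [mul_assoc] using this
    · intro g hg
      simp only [Finset.bipartiteBelow, Finset.coe_filter, Set.mem_ofPred_eq, mem_conjAxis,
        Finset.coe_erase, Finset.mem_univ, true_and, Set.mem_sdiff, Set.mem_singleton_iff] at hg ⊢
      have h2 : (k * g * k⁻¹) • k • v = k • v := by
        rw [mul_smul, inv_smul_smul, mul_smul, hg.1]
      refine ⟨⟨?_, k, h2⟩, h2⟩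
      intro h1
      apply hg.2
      have := congrArg (fun z => k⁻¹ * z * k) h1
      simpa [mul_assoc] using this
    · intro g _; simp [mul_assoc]
    · intro g _; simp [mul_assoc]
  rw [Finset.sum_congr rfl hA, Finset.sum_congr rfl hB] at key
  simpa [Nat.card_eq_fintype_card] using key

theorem disjoint_conjAxis [Fintype Γ] (h : IsRotationAction Γ X) {u v : X} {g : Γ}
    (h1 : g ≠ 1) (hu : g • u = u) (hg : g ∉ conjAxis (Γ := Γ) v) :
    Disjoint (conjAxis (Γ := Γ) u) (conjAxis v) := by
  rw [Finset.disjoint_left]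
  intro a ha hb
  obtain ⟨ha1, k, hk⟩ := mem_conjAxis.1 ha
  obtain ⟨_, k', hk'⟩ := mem_conjAxis.1 hb
  apply hg
  refine mem_conjAxis.2 ⟨h1, k⁻¹ * k', ?_⟩
  rcases h.fix_unique ha1 hk' hk with e | e
  · rw [mul_smul, e, inv_smul_smul, hu]
  · rw [mul_smul, e, h.smul_neg, inv_smul_smul, h.smul_neg, hu]

/-- The number of conjugates of an axis, the order `n` of its rotation group, and the factor `e`
(whether its poles are exchanged), together with the resulting class size. -/
theorem axis_data [Fintype Γ] (h : IsRotationAction Γ X) {v : X} {g : Γ} (h1 : g ≠ 1)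
    (hv : g • v = v) : ∃ n e d : ℕ, 2 ≤ n ∧
      ((e = 1 ∧ ∀ g : Γ, g • v ≠ -v) ∨ (e = 2 ∧ ∃ g : Γ, g • v = -v)) ∧
      Nat.card (MulAction.stabilizer Γ v) = n ∧ (h.axisStab v).index = d ∧
      Nat.card Γ = d * e * n ∧ (conjAxis (Γ := Γ) v).card + d = d * n := by
  have hn : 2 ≤ Nat.card (MulAction.stabilizer Γ v) := by
    have : Nontrivial (MulAction.stabilizer Γ v) :=
      ⟨⟨g, hv⟩, 1, fun e => h1 (congrArg Subtype.val e)⟩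
    exact Finite.one_lt_card
  have hc := h.card_conjAxis v
  have hi := (h.axisStab v).index_mul_card
  have hpos : 0 < Nat.card (h.axisStab v) := Nat.card_pos
  have hS : (conjAxis (Γ := Γ) v).card
      = (h.axisStab v).index * (Nat.card (MulAction.stabilizer Γ v) - 1) := by
    apply Nat.eq_of_mul_eq_mul_right hpos
    rw [hc, ← hi]; ring
  have hS2 : (conjAxis (Γ := Γ) v).card + (h.axisStab v).index
      = (h.axisStab v).index * Nat.card (MulAction.stabilizer Γ v) := by
    rw [hS]
    obtain ⟨m, hm⟩ := Nat.exists_eq_add_of_le hn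
    rw [hm]
    have : 2 + m - 1 = m + 1 := by omega
    rw [this]; ring
  rcases h.card_axisStab v with ⟨hf, hk⟩ | ⟨hf, hk⟩
  · exact ⟨_, 1, _, hn, Or.inl ⟨rfl, hf⟩, rfl, rfl, by rw [← hi, hk]; ring, hS2⟩
  · exact ⟨_, 2, _, hn, Or.inr ⟨rfl, hf⟩, rfl, rfl, by rw [← hi, hk]; ring, hS2⟩

theorem conjAxis_subset [Fintype Γ] [DecidableEq Γ] (v : X) :
    conjAxis (Γ := Γ) v ⊆ Finset.univ.erase 1 := by
  intro g hg
  simp [(mem_conjAxis.1 hg).1]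

/-- If the non-identity elements are not exhausted by a set `S`, there is a further axis. -/
theorem exists_new [Fintype Γ] [DecidableEq Γ] (h : IsRotationAction Γ X) (S : Finset Γ)
    (hS : S ⊆ Finset.univ.erase 1) (hc : S.card ≠ Nat.card Γ - 1) :
    ∃ (g : Γ) (v : X), g ≠ 1 ∧ g • v = v ∧ g ∉ S := by
  have : ∃ g ∈ Finset.univ.erase (1 : Γ), g ∉ S := by
    by_contra hcon
    push Not at hcon
    apply hc
    rw [Finset.Subset.antisymm hS hcon, Finset.card_erase_of_mem (by simp)]
    simp [Nat.card_eq_fintype_card]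
  obtain ⟨g, hg, hgS⟩ := this
  have h1 : g ≠ 1 := by simpa using hg
  obtain ⟨v, hv, _⟩ := h.pole g h1
  exact ⟨g, v, h1, hv, hgS⟩

/-- An axis with at least four rotations whose poles are not exchanged is fixed by everything:
its conjugates account for at least three quarters of the group, and any further class of axes
would need at least another quarter. -/
theorem fixed_of_four_le [Finite Γ] (h : IsRotationAction Γ X) {v : X}
    (hn : 4 ≤ Nat.card (MulAction.stabilizer Γ v)) (hf : ∀ g : Γ, g • v ≠ -v) :
    ∀ g : Γ, g • v = v := by
  classical
  have := Fintype.ofFinite Γ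
  have hnt : Nontrivial (MulAction.stabilizer Γ v) :=
    Finite.one_lt_card_iff_nontrivial.1 (by omega)
  obtain ⟨⟨g, hg⟩, hg1⟩ := exists_ne (1 : MulAction.stabilizer Γ v)
  have h1 : g ≠ 1 := fun e => hg1 (Subtype.ext e)
  obtain ⟨n, e, d, hn2, he, hnn, hd, hN, hS⟩ := h.axis_data h1 hg
  have hS4 : n ≥ 4 := by omega
  have he : e = 1 := by
    rcases he with he | ⟨-, k, hk⟩
    · exact he.1
    · exact absurd hk (hf k)
  subst he
  by_cases hall : (conjAxis (Γ := Γ) v).card = Nat.card Γ - 1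
  · have hpos : 0 < Nat.card Γ := Nat.card_pos
    have hd1 : d = 1 := by
      rw [mul_one] at hN
      omega
    rw [hd1] at hd
    rw [Subgroup.index_eq_one] at hd
    intro g
    have : g ∈ h.axisStab v := by rw [hd]; trivial
    rcases this with h3 | h3
    · exact h3
    · exact absurd h3 (hf g)
  · exfalso
    obtain ⟨g', u, hg', hu, hgS⟩ := h.exists_new _ (conjAxis_subset v) hall
    obtain ⟨n', e', d', hn2', he', hnn', hd', hN', hS'⟩ := h.axis_data hg' hu
    have hdis := h.disjoint_conjAxis hg' hu hgS
    have hle := Finset.card_le_card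
      (Finset.union_subset (conjAxis_subset (Γ := Γ) u) (conjAxis_subset v))
    rw [Finset.card_union_of_disjoint hdis, Finset.card_erase_of_mem (by simp),
      Finset.card_univ, ← Nat.card_eq_fintype_card] at hle
    have hpos : 0 < Nat.card Γ := Nat.card_pos
    have a1 : d * 4 ≤ d * n := Nat.mul_le_mul_left d hS4
    have a2 : d' * 2 ≤ d' * n' := Nat.mul_le_mul_left d' hn2'
    have a3 : Nat.card Γ ≤ 2 * (d' * n') := by
      rcases he' with ⟨rfl, _⟩ | ⟨rfl, _⟩
      · rw [hN', mul_one]; omega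
      · rw [hN']; nlinarith
    rw [mul_one] at hN
    omega

/-- A finite rotation group of odd order has a common axis. -/
theorem fixed_of_odd [Finite Γ] [Nonempty X] (h : IsRotationAction Γ X)
    (hodd : ¬ 2 ∣ Nat.card Γ) : ∃ v : X, ∀ g : Γ, g • v = v := by
  classical
  have := Fintype.ofFinite Γ
  have hflip : ∀ (g : Γ) (v : X), g • v ≠ -v := by
    intro g v hg
    obtain ⟨h1, h2⟩ := h.sq_eq_one_of_flip hg
    apply hodd
    rw [← orderOf_eq_prime (p := 2) (by rw [pow_two, h2]) h1]
    exact orderOf_dvd_natCard g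
  by_cases h0 : (∅ : Finset Γ).card = Nat.card Γ - 1
  · have : Nat.card Γ = 1 := by
      have : 0 < Nat.card Γ := Nat.card_pos
      rw [Finset.card_empty] at h0; omega
    obtain ⟨hs, -⟩ := Nat.card_eq_one_iff_unique.1 this
    obtain ⟨v⟩ := ‹Nonempty X›
    exact ⟨v, fun g => by rw [Subsingleton.elim g 1, one_smul]⟩
  obtain ⟨g, v, h1, hv, -⟩ := h.exists_new ∅ (by simp) h0
  obtain ⟨n, e, d, hn2, he, hnn, hd, hN, hS⟩ := h.axis_data h1 hv
  have key : ∀ n e d : ℕ, 2 ≤ n → (e = 1 ∨ e = 2) →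
      Nat.card Γ = d * e * n → e = 1 ∧ d * 3 ≤ d * n := by
    intro n e d hn he hN
    rcases he with rfl | rfl
    · refine ⟨rfl, Nat.mul_le_mul_left d ?_⟩
      by_contra hc
      have : n = 2 := by omega
      apply hodd
      rw [hN, this]; exact Dvd.intro_left _ rfl
    · exfalso; apply hodd; rw [hN]; exact ⟨d * n, by ring⟩
  obtain ⟨rfl, a1⟩ := key n e d hn2 (he.imp And.left And.left) hN
  rw [mul_one] at hN
  have hpos : 0 < Nat.card Γ := Nat.card_pos
  by_cases hall : (conjAxis (Γ := Γ) v).card = Nat.card Γ - 1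
  · have hd1 : d = 1 := by omega
    rw [hd1] at hd
    rw [Subgroup.index_eq_one] at hd
    refine ⟨v, fun g => ?_⟩
    have : g ∈ h.axisStab v := by rw [hd]; trivial
    rcases this with h3 | h3
    · exact h3
    · exact absurd h3 (hflip g v)
  · exfalso
    obtain ⟨g', u, hg', hu, hgS⟩ := h.exists_new _ (conjAxis_subset v) hall
    obtain ⟨n', e', d', hn2', he', hnn', hd', hN', hS'⟩ := h.axis_data hg' hu
    have hdis := h.disjoint_conjAxis hg' hu hgS
    have hle := Finset.card_le_card
      (Finset.union_subset (conjAxis_subset (Γ := Γ) u) (conjAxis_subset v))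
    rw [Finset.card_union_of_disjoint hdis, Finset.card_erase_of_mem (by simp),
      Finset.card_univ, ← Nat.card_eq_fintype_card] at hle
    obtain ⟨rfl, a2⟩ := key n' e' d' hn2' (he'.imp And.left And.left) hN'
    rw [mul_one] at hN'
    omega

/-- The arithmetic of the class equation: each axis class contributes `N / e - d` elements, where
`d` is the number of axes in it, and `d` is `N / (e * n)` with `n ≥ 2`. The lemma packages the
relation between `d` and `n` in linear form. -/
theorem linear_data {N n e d s : ℕ} (hn : 2 ≤ n) (he : e = 1 ∨ e = 2) (hN : N = d * e * n)
    (hs : s + d = d * n) : ∃ M : ℕ, (N = M ∨ N = 2 * M) ∧ s + d = M ∧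
      (2 * d = M ∨ 3 * d = M ∨ 4 * d = M ∨ 5 * d = M ∨ 6 * d ≤ M) := by
  refine ⟨d * n, ?_, hs, ?_⟩
  · rcases he with rfl | rfl
    · left; rw [hN]; ring
    · right; rw [hN]; ring
  · rcases Nat.lt_or_ge n 6 with h6 | h6
    · interval_cases n <;> omega
    · have := Nat.mul_le_mul_left d h6
      omega

theorem no_two_classes {N d₁ M₁ d₂ M₂ : ℕ} (h₁ : 7 ≤ d₁) (h₂ : 7 ≤ d₂)
    (hM₁ : N = M₁ ∨ N = 2 * M₁) (hM₂ : N = M₂ ∨ N = 2 * M₂)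
    (hc₁ : 2 * d₁ = M₁ ∨ 3 * d₁ = M₁ ∨ 4 * d₁ = M₁ ∨ 5 * d₁ = M₁ ∨ 6 * d₁ ≤ M₁)
    (hc₂ : 2 * d₂ = M₂ ∨ 3 * d₂ = M₂ ∨ 4 * d₂ = M₂ ∨ 5 * d₂ = M₂ ∨ 6 * d₂ ≤ M₂)
    (hsum : M₁ + M₂ + 1 = N + d₁ + d₂) : False := by
  rcases hM₁ with hM₁ | hM₁ <;> rcases hM₂ with hM₂ | hM₂ <;>
  rcases hc₁ with hc₁ | hc₁ | hc₁ | hc₁ | hc₁ <;>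
  rcases hc₂ with hc₂ | hc₂ | hc₂ | hc₂ | hc₂ <;> omega

theorem no_three_classes {M d₁ d₂ d₃ : ℕ} (h₁ : 7 ≤ d₁) (h₂ : 7 ≤ d₂) (h₃ : 7 ≤ d₃)
    (hc₁ : 2 * d₁ = M ∨ 3 * d₁ = M ∨ 4 * d₁ = M ∨ 5 * d₁ = M ∨ 6 * d₁ ≤ M)
    (hc₂ : 2 * d₂ = M ∨ 3 * d₂ = M ∨ 4 * d₂ = M ∨ 5 * d₂ = M ∨ 6 * d₂ ≤ M)
    (hc₃ : 2 * d₃ = M ∨ 3 * d₃ = M ∨ 4 * d₃ = M ∨ 5 * d₃ = M ∨ 6 * d₃ ≤ M)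
    (hsum : d₁ + d₂ + d₃ = M + 1) : False := by
  rcases hc₁ with hc₁ | hc₁ | hc₁ | hc₁ | hc₁ <;>
  rcases hc₂ with hc₂ | hc₂ | hc₂ | hc₂ | hc₂ <;>
  rcases hc₃ with hc₃ | hc₃ | hc₃ | hc₃ | hc₃ <;> omega

/-- Some axis of a finite rotation group has at most six conjugates. If every axis had at least
seven, the class equation could not be satisfied: there are at most three classes of axes, and each
case is excluded by integer arithmetic. -/
theorem exists_index_le_six [Finite Γ] [Nonempty X] (h : IsRotationAction Γ X) :
    ∃ v : X, (h.axisStab v).index ≤ 6 := by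
  classical
  have := Fintype.ofFinite Γ
  by_contra hcon
  push Not at hcon
  have hpos : 0 < Nat.card Γ := Nat.card_pos
  have data : ∀ {g : Γ} {v : X}, g ≠ 1 → g • v = v → ∃ d M : ℕ, 7 ≤ d ∧
      (Nat.card Γ = M ∨ Nat.card Γ = 2 * M) ∧ (conjAxis (Γ := Γ) v).card + d = M ∧
      (2 * d = M ∨ 3 * d = M ∨ 4 * d = M ∨ 5 * d = M ∨ 6 * d ≤ M) := by
    intro g v h1 hv
    obtain ⟨n, e, d, hn2, he, hnn, hd, hN, hS⟩ := h.axis_data h1 hv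
    obtain ⟨M, hM⟩ := linear_data hn2 (he.imp And.left And.left) hN hS
    exact ⟨d, M, hd ▸ hcon v, hM⟩
  have hle : ∀ S : Finset Γ, S ⊆ Finset.univ.erase 1 → S.card ≤ Nat.card Γ - 1 := by
    intro S hS
    have := Finset.card_le_card hS
    rwa [Finset.card_erase_of_mem (by simp), Finset.card_univ,
      ← Nat.card_eq_fintype_card] at this
  have hN : 7 ≤ Nat.card Γ := by
    obtain ⟨v⟩ := ‹Nonempty X›
    exact (hcon v).trans_le (Nat.le_of_dvd hpos (h.axisStab v).index_dvd_card)
  obtain ⟨g1, v1, hg1, hv1, -⟩ := h.exists_new ∅ (by simp) (by rw [Finset.card_empty]; omega)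
  obtain ⟨d1, M1, hd1, hM1, hs1, hc1⟩ := data hg1 hv1
  have hw1 : 2 * d1 ≤ M1 := by clear hM1 hs1; omega
  have hsub1 := conjAxis_subset (Γ := Γ) v1
  by_cases hall1 : (conjAxis (Γ := Γ) v1).card = Nat.card Γ - 1
  · clear hc1
    omega
  obtain ⟨g2, v2, hg2, hv2, hn2⟩ := h.exists_new _ hsub1 hall1
  obtain ⟨d2, M2, hd2, hM2, hs2, hc2⟩ := data hg2 hv2
  have hw2 : 2 * d2 ≤ M2 := by clear hM2 hs2; omega
  have hdis2 := h.disjoint_conjAxis hg2 hv2 hn2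
  have hsub2 := Finset.union_subset (conjAxis_subset (Γ := Γ) v2) hsub1
  have hle2 := hle _ hsub2
  by_cases hall2 : (conjAxis (Γ := Γ) v2 ∪ conjAxis v1).card = Nat.card Γ - 1
  · rw [Finset.card_union_of_disjoint hdis2] at hall2
    exact no_two_classes hd1 hd2 hM1 hM2 hc1 hc2 (by clear hM1 hM2 hc1 hc2; omega)
  obtain ⟨g3, v3, hg3, hv3, hn3⟩ := h.exists_new _ hsub2 hall2
  obtain ⟨d3, M3, hd3, hM3, hs3, hc3⟩ := data hg3 hv3
  have hw3 : 2 * d3 ≤ M3 := by clear hM3 hs3; omega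
  rw [Finset.notMem_union] at hn3
  have hdis3 := Finset.disjoint_union_right.2
    ⟨h.disjoint_conjAxis hg3 hv3 hn3.1, h.disjoint_conjAxis hg3 hv3 hn3.2⟩
  have hsub3 := Finset.union_subset (conjAxis_subset (Γ := Γ) v3) hsub2
  have hle3 := hle _ hsub3
  rw [Finset.card_union_of_disjoint hdis3, Finset.card_union_of_disjoint hdis2] at hle3
  -- Three classes each cover at least a quarter of the group, which excludes `M = N`.
  have hM1' : Nat.card Γ = 2 * M1 := by clear hc1 hc2 hc3; omega
  have hM2' : Nat.card Γ = 2 * M2 := by clear hc1 hc2 hc3; omega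
  have hM3' : Nat.card Γ = 2 * M3 := by clear hc1 hc2 hc3; omega
  by_cases hall3 : (conjAxis (Γ := Γ) v3 ∪ (conjAxis v2 ∪ conjAxis v1)).card = Nat.card Γ - 1
  · rw [Finset.card_union_of_disjoint hdis3, Finset.card_union_of_disjoint hdis2] at hall3
    have e2 : M2 = M1 := by clear hM1 hM2 hM3 hc1 hc2 hc3; omega
    have e3 : M3 = M1 := by clear hM1 hM2 hM3 hc1 hc2 hc3; omega
    subst e2 e3
    exact no_three_classes hd1 hd2 hd3 hc1 hc2 hc3 (by clear hM1 hM2 hM3 hc1 hc2 hc3; omega)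
  obtain ⟨g4, v4, hg4, hv4, hn4⟩ := h.exists_new _ hsub3 hall3
  obtain ⟨d4, M4, hd4, hM4, hs4, hc4⟩ := data hg4 hv4
  have hw4 : 2 * d4 ≤ M4 := by clear hM4 hs4; omega
  rw [Finset.notMem_union, Finset.notMem_union] at hn4
  have hdis4 := Finset.disjoint_union_right.2 ⟨h.disjoint_conjAxis hg4 hv4 hn4.1,
    Finset.disjoint_union_right.2
      ⟨h.disjoint_conjAxis hg4 hv4 hn4.2.1, h.disjoint_conjAxis hg4 hv4 hn4.2.2⟩⟩
  have hle4 := hle _ (Finset.union_subset (conjAxis_subset (Γ := Γ) v4) hsub3)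
  rw [Finset.card_union_of_disjoint hdis4, Finset.card_union_of_disjoint hdis3,
    Finset.card_union_of_disjoint hdis2] at hle4
  clear hM1 hM2 hM3 hc1 hc2 hc3 hc4
  omega

end IsRotationAction

/-! ### Pairs of rotation actions -/

/-- An element can be replaced by an odd power of itself whose order is a power of two. -/
theorem exists_odd_pow_two_power {G : Type*} [Group G] [Finite G] (g : G) :
    ∃ m s : ℕ, Odd m ∧ (g ^ m) ^ 2 ^ s = 1 := by
  obtain ⟨s, m, hm, he⟩ := Nat.exists_eq_two_pow_mul_odd (orderOf_pos g).ne'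
  exact ⟨m, s, hm, by rw [← pow_mul, mul_comm, ← he, pow_orderOf_eq_one]⟩

theorem pow_odd_of_orderOf_two {G : Type*} [Group G] {g : G} (hg : orderOf g = 2) {m : ℕ}
    (hm : Odd m) : g ^ m = g := by
  obtain ⟨k, rfl⟩ := hm
  rw [pow_succ, pow_mul, ← hg, pow_orderOf_eq_one, one_pow, one_mul]

/-- The image of an element of two-power order is trivial, has order two, or has order divisible by
four; in the last case the image of some even power of the element has order two. -/
theorem order_two_pow_cases {G H : Type*} [Group G] [Group H] (f : G →* H) {g : G} {s : ℕ}
    (hg : g ^ 2 ^ s = 1) : f g = 1 ∨ orderOf (f g) = 2 ∨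
      (4 ∣ orderOf (f g) ∧ ∃ k, orderOf (f (g ^ (2 * k))) = 2) := by
  have h1 : orderOf (f g) ∣ 2 ^ s := orderOf_dvd_of_pow_eq_one (by rw [← map_pow, hg, map_one])
  obtain ⟨t, -, ht⟩ := (Nat.dvd_prime_pow Nat.prime_two).1 h1
  match t, ht with
  | 0, ht => exact Or.inl (orderOf_eq_one_iff.1 ht)
  | 1, ht => exact Or.inr (Or.inl ht)
  | t + 2, ht =>
    refine Or.inr (Or.inr ⟨⟨2 ^ t, by rw [ht]; ring⟩, 2 ^ t, ?_⟩)
    have e : 2 * 2 ^ t = 2 ^ (t + 1) := by ring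
    rw [map_pow, orderOf_pow_of_dvd (by positivity) (by rw [ht, e]; exact pow_dvd_pow 2 (by omega)),
      ht, e, pow_succ 2 (t + 1)]
    simp

/-- The case of `common_axis` in which no element is trivial under `α` and a half-turn under `β`. -/
theorem common_axis_aux {G X : Type*} [Group G] [Finite G] [InvolutiveNeg X] [Nonempty X]
    (α β : G →* Equiv.Perm X) (hα : IsRotationAction α.range X)
    (hβ : IsRotationAction β.range X)
    (hP : ∀ g, orderOf (α g) = 2 → orderOf (β g) = 2 → False)
    (hno : ∀ g, α g = 1 → orderOf (β g) ≠ 2) :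
    (∃ v, ∀ g, α g v = v) ∨ (∃ v, ∀ g, β g v = v) := by
  have : Finite α.range := Finite.of_surjective _ α.rangeRestrict_surjective
  have : Finite β.range := Finite.of_surjective _ β.rangeRestrict_surjective
  -- Every half-turn on the `α` side lifts to an element acting trivially on the `β` side.
  have lift : ∀ g, orderOf (α g) = 2 → ∃ g', α g' = α g ∧ β g' = 1 := by
    intro g hg
    obtain ⟨m, s, hm, hs⟩ := exists_odd_pow_two_power g
    have ha : α (g ^ m) = α g := by rw [map_pow, pow_odd_of_orderOf_two hg hm]
    refine ⟨g ^ m, ha, ?_⟩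
    rcases order_two_pow_cases β hs with h | h | ⟨-, k, h⟩
    · exact h
    · exact (hP (g ^ m) (by rw [ha, hg]) h).elim
    · refine (hno _ ?_ h).elim
      rw [map_pow, ha, pow_mul, ← hg, pow_orderOf_eq_one, one_pow]
  by_cases hodd : 2 ∣ Nat.card β.range
  swap
  · obtain ⟨v, hv⟩ := hβ.fixed_of_odd hodd
    exact Or.inr ⟨v, fun g => hv ⟨β g, g, rfl⟩⟩
  obtain ⟨⟨b, g0, hg0⟩, hb⟩ := exists_prime_orderOf_dvd_card' 2 hodd
  have hb0 : orderOf (β g0) = 2 := by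
    rw [hg0, ← hb]; exact (Subgroup.orderOf_mk _ _).symm
  obtain ⟨m, s, hm, hs⟩ := exists_odd_pow_two_power g0
  have hbg : orderOf (β (g0 ^ m)) = 2 := by rw [map_pow, pow_odd_of_orderOf_two hb0 hm, hb0]
  generalize g0 ^ m = g at hs hbg
  rcases order_two_pow_cases α hs with h | h | ⟨h4, -⟩
  · exact (hno g h hbg).elim
  · exact (hP g h hbg).elim
  let a : α.range := ⟨α g, g, rfl⟩
  have hoa : orderOf a = orderOf (α g) := Subgroup.orderOf_mk _ _
  have hapos : 0 < orderOf a := orderOf_pos a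
  have ha4 : 4 ≤ orderOf a := Nat.le_of_dvd hapos (hoa ▸ h4)
  have ha1 : a ≠ 1 := by
    intro e; rw [e, orderOf_one] at ha4; omega
  obtain ⟨v, hv, -⟩ := hα.pole a ha1
  have hstab : 4 ≤ Nat.card (MulAction.stabilizer α.range v) := by
    have : Subgroup.zpowers a ≤ MulAction.stabilizer α.range v := by
      rw [Subgroup.zpowers_le]; exact hv
    have := Subgroup.card_le_of_le this
    rw [Nat.card_zpowers] at this
    omega
  by_cases hf : ∃ w : α.range, w • v = -v
  swap
  · push Not at hf
    have := hα.fixed_of_four_le hstab hf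
    exact Or.inl ⟨v, fun g => this ⟨α g, g, rfl⟩⟩
  -- A half-turn `w` reversing the axis of `a` makes `a * w` a half-turn as well.
  exfalso
  obtain ⟨w, hw⟩ := hf
  have two : ∀ z : α.range, z • v = -v → orderOf (z : Equiv.Perm X) = 2 := by
    intro z hz
    obtain ⟨h1, h2⟩ := hα.sq_eq_one_of_flip hz
    rw [Subgroup.orderOf_coe]
    exact orderOf_eq_prime (by rw [pow_two, h2]) h1
  have haw : (a * w) • v = -v := by rw [mul_smul, hw, hα.fix_neg hv]
  have hw2 := two w hw
  have haw2 := two _ haw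
  obtain ⟨_, g1, rfl⟩ := w
  obtain ⟨g2, hg2, hg2b⟩ := lift g1 hw2
  refine hP (g * g2) ?_ (by rw [map_mul, hg2b, mul_one, hbg])
  rw [map_mul, hg2]; exact haw2

/-- If a finite group acts by rotations on two spheres such that no element is a half-turn on
both, then one of the two actions has a common axis. -/
theorem common_axis {G X : Type*} [Group G] [Finite G] [InvolutiveNeg X] [Nonempty X]
    (α β : G →* Equiv.Perm X) (hα : IsRotationAction α.range X)
    (hβ : IsRotationAction β.range X)
    (hP : ∀ g, orderOf (α g) = 2 → orderOf (β g) = 2 → False) :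
    (∃ v, ∀ g, α g v = v) ∨ (∃ v, ∀ g, β g v = v) := by
  by_cases h1 : ∀ g, α g = 1 → orderOf (β g) ≠ 2
  · exact common_axis_aux α β hα hβ hP h1
  by_cases h2 : ∀ g, β g = 1 → orderOf (α g) ≠ 2
  · exact (common_axis_aux β α hβ hα (fun g a b => hP g b a) h2).symm
  push Not at h1 h2
  obtain ⟨g, hg, hg'⟩ := h1
  obtain ⟨k, hk, hk'⟩ := h2
  exact (hP (g * k) (by rw [map_mul, hg, one_mul, hk'])
    (by rw [map_mul, hk, mul_one, hg'])).elim

/-! ### Unit quaternions and rotations -/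

open scoped Quaternion RealInnerProductSpace

/-- The unit sphere of pure quaternions, described as the set of square roots of `-1`. -/
abbrev PureUnit : Type := {y : ℍ[ℝ] // y * y = -1}

instance : InvolutiveNeg PureUnit where
  neg y := ⟨-y.1, by rw [neg_mul_neg, y.2]⟩
  neg_neg y := Subtype.ext (neg_neg y.1)

theorem PureUnit.coe_neg (y : PureUnit) : ((-y : PureUnit) : ℍ[ℝ]) = -(y : ℍ[ℝ]) := rfl

theorem PureUnit.re_eq (y : PureUnit) : y.1.re = 0 := by
  have h := y.2
  have h0 := congrArg QuaternionAlgebra.re h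
  have h1 := congrArg QuaternionAlgebra.imI h
  have h2 := congrArg QuaternionAlgebra.imJ h
  have h3 := congrArg QuaternionAlgebra.imK h
  simp at h0 h1 h2 h3
  by_contra hr
  have e1 : y.1.imI = 0 := by
    have : y.1.re * y.1.imI = 0 := by linarith
    exact (mul_eq_zero.1 this).resolve_left hr
  have e2 : y.1.imJ = 0 := by
    have : y.1.re * y.1.imJ = 0 := by linarith
    exact (mul_eq_zero.1 this).resolve_left hr
  have e3 : y.1.imK = 0 := by
    have : y.1.re * y.1.imK = 0 := by linarith
    exact (mul_eq_zero.1 this).resolve_left hr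
  rw [e1, e2, e3] at h0
  nlinarith [sq_nonneg y.1.re]

theorem PureUnit.norm_eq (y : PureUnit) : y.1.imI ^ 2 + y.1.imJ ^ 2 + y.1.imK ^ 2 = 1 := by
  have h0 := congrArg QuaternionAlgebra.re y.2
  simp [y.re_eq] at h0
  linarith

theorem PureUnit.star_eq (y : PureUnit) : star (y : ℍ[ℝ]) = -y := by
  ext <;> simp [y.re_eq]

theorem mul_self_of_pure {q : ℍ[ℝ]} (h0 : q.re = 0)
    (h : q.imI ^ 2 + q.imJ ^ 2 + q.imK ^ 2 = 1) : q * q = -1 := by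
  ext <;> simp [h0] <;> linarith

/-- The point of the unit sphere with given coordinates. -/
def PureUnit.mk' (a b c : ℝ) (h : a ^ 2 + b ^ 2 + c ^ 2 = 1) : PureUnit :=
  ⟨⟨0, a, b, c⟩, mul_self_of_pure rfl h⟩

section
variable (a b c : ℝ) (h : a ^ 2 + b ^ 2 + c ^ 2 = 1)

@[simp] theorem PureUnit.re_mk' : (PureUnit.mk' a b c h).1.re = 0 := rfl
@[simp] theorem PureUnit.imI_mk' : (PureUnit.mk' a b c h).1.imI = a := rfl
@[simp] theorem PureUnit.imJ_mk' : (PureUnit.mk' a b c h).1.imJ = b := rfl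
@[simp] theorem PureUnit.imK_mk' : (PureUnit.mk' a b c h).1.imK = c := rfl

end

instance : Nonempty PureUnit := ⟨PureUnit.mk' 1 0 0 (by norm_num)⟩

/-- The Euclidean inner product on the sphere of pure quaternions. -/
def PureUnit.dot (y v : PureUnit) : ℝ :=
  y.1.imI * v.1.imI + y.1.imJ * v.1.imJ + y.1.imK * v.1.imK

theorem PureUnit.dot_eq (y v : PureUnit) : y.dot v = -((y : ℍ[ℝ]) * v).re := by
  simp [PureUnit.dot, y.re_eq]; ring

theorem PureUnit.dot_self (y : PureUnit) : y.dot y = 1 := by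
  have := y.norm_eq
  unfold PureUnit.dot
  linarith

theorem PureUnit.dot_neg_left (y v : PureUnit) : (-y).dot v = -y.dot v := by
  simp [PureUnit.dot_eq, PureUnit.coe_neg]

theorem unitary_star_mul (u : unitary ℍ[ℝ]) : star (u : ℍ[ℝ]) * u = 1 := u.2.1

theorem unitary_mul_star (u : unitary ℍ[ℝ]) : (u : ℍ[ℝ]) * star (u : ℍ[ℝ]) = 1 := u.2.2

theorem conj_mul_self (u : unitary ℍ[ℝ]) (y : PureUnit) :
    ((u : ℍ[ℝ]) * (y : ℍ[ℝ]) * star (u : ℍ[ℝ])) * ((u : ℍ[ℝ]) * (y : ℍ[ℝ]) * star (u : ℍ[ℝ]))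
      = -1 := by
  calc _ = (u : ℍ[ℝ]) * y * (star (u : ℍ[ℝ]) * u) * y * star (u : ℍ[ℝ]) := by noncomm_ring
    _ = (u : ℍ[ℝ]) * ((y : ℍ[ℝ]) * y) * star (u : ℍ[ℝ]) := by
        rw [unitary_star_mul]; noncomm_ring
    _ = -((u : ℍ[ℝ]) * star (u : ℍ[ℝ])) := by rw [y.2]; noncomm_ring
    _ = -1 := by rw [unitary_mul_star]

/-- Rotation of the sphere of pure quaternions by conjugation with a unit quaternion. -/
noncomputable def conjPerm : unitary ℍ[ℝ] →* Equiv.Perm PureUnit :=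
  MonoidHom.toHomPerm
    { toFun := fun u y => ⟨(u : ℍ[ℝ]) * (y : ℍ[ℝ]) * star (u : ℍ[ℝ]), conj_mul_self u y⟩
      map_one' := by
        funext y
        apply Subtype.ext
        change (1 : ℍ[ℝ]) * y * star (1 : ℍ[ℝ]) = y
        rw [star_one, one_mul, mul_one]
      map_mul' := by
        intro a b
        funext y
        apply Subtype.ext
        change ((a : ℍ[ℝ]) * b) * y * star ((a : ℍ[ℝ]) * b)
          = a * (b * y * star (b : ℍ[ℝ])) * star (a : ℍ[ℝ])
        rw [star_mul]
        noncomm_ring }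

theorem conjPerm_apply (u : unitary ℍ[ℝ]) (y : PureUnit) :
    (conjPerm u y : ℍ[ℝ]) = u * y * star (u : ℍ[ℝ]) := rfl

theorem dot_conjPerm (u : unitary ℍ[ℝ]) (y v : PureUnit) :
    (conjPerm u y).dot v = y.dot ((conjPerm u)⁻¹ v) := by
  have re_comm : ∀ a b : ℍ[ℝ], (a * b).re = (b * a).re := by
    intro a b; simp; ring
  rw [← map_inv, PureUnit.dot_eq, PureUnit.dot_eq, conjPerm_apply, conjPerm_apply,
    show ((u⁻¹ : unitary ℍ[ℝ]) : ℍ[ℝ]) = star (u : ℍ[ℝ]) from rfl, star_star, mul_assoc, mul_assoc,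
    re_comm]
  congr 2
  noncomm_ring

theorem conjPerm_fix_iff (u : unitary ℍ[ℝ]) (y : PureUnit) :
    conjPerm u y = y ↔ (u : ℍ[ℝ]) * y = y * u := by
  rw [Subtype.ext_iff, conjPerm_apply]
  constructor
  · intro h
    calc (u : ℍ[ℝ]) * y = u * y * (star (u : ℍ[ℝ]) * u) := by
          rw [unitary_star_mul, mul_one]
      _ = y * u := by rw [← mul_assoc, h]
  · intro h
    rw [h, mul_assoc, unitary_mul_star, mul_one]

theorem eq_or_eq_neg_of_commute {y v : PureUnit} (h : (y : ℍ[ℝ]) * v = v * y) :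
    y = v ∨ y = -v := by
  have : ((y : ℍ[ℝ]) - v) * (y + v) = 0 := by
    have e : ((y : ℍ[ℝ]) - v) * (y + v) = y * y + (y * v - v * y) - v * v := by noncomm_ring
    rw [e, h, y.2, v.2]; simp
  rcases mul_eq_zero.1 this with h | h
  · exact Or.inl (Subtype.ext (sub_eq_zero.1 h))
  · exact Or.inr (Subtype.ext (eq_neg_of_add_eq_zero_left h))

theorem im_eq_zero_of_central {a : ℍ[ℝ]} (h : ∀ y : PureUnit, a * y = y * a) :
    a.imI = 0 ∧ a.imJ = 0 ∧ a.imK = 0 := by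
  have hi := h (PureUnit.mk' 1 0 0 (by norm_num))
  have hj := h (PureUnit.mk' 0 1 0 (by norm_num))
  have i2 := congrArg QuaternionAlgebra.imJ hi
  have i3 := congrArg QuaternionAlgebra.imK hi
  have j3 := congrArg QuaternionAlgebra.imK hj
  simp at i2 i3 j3
  refine ⟨?_, ?_, ?_⟩ <;> linarith

theorem conjPerm_eq_one_iff (u : unitary ℍ[ℝ]) :
    conjPerm u = 1 ↔ u.1.imI = 0 ∧ u.1.imJ = 0 ∧ u.1.imK = 0 := by
  constructor
  · intro h
    refine im_eq_zero_of_central fun y => (conjPerm_fix_iff u y).1 ?_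
    rw [h]; rfl
  · rintro ⟨h1, h2, h3⟩
    ext1 y
    refine (conjPerm_fix_iff u y).2 ?_
    ext <;> simp [h1, h2, h3] <;> ring

theorem unitary_normSq (u : unitary ℍ[ℝ]) :
    u.1.re ^ 2 + u.1.imI ^ 2 + u.1.imJ ^ 2 + u.1.imK ^ 2 = 1 := by
  have := congrArg QuaternionAlgebra.re (unitary_star_mul u)
  simp only [Quaternion.re_mul, Quaternion.re_star, Quaternion.imI_star, Quaternion.imJ_star,
    Quaternion.imK_star, Quaternion.re_one] at this
  linarith

theorem conjPerm_pole (u : unitary ℍ[ℝ]) (hu : conjPerm u ≠ 1) :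
    ∃ v, conjPerm u v = v ∧ ∀ y, conjPerm u y = y → y = v ∨ y = -v := by
  rw [Ne, conjPerm_eq_one_iff] at hu
  set m := u.1.imI ^ 2 + u.1.imJ ^ 2 + u.1.imK ^ 2 with hm
  have hpos : 0 < m := by
    by_contra hc
    apply hu
    refine ⟨?_, ?_, ?_⟩ <;> apply pow_eq_zero_iff (two_ne_zero) |>.1 <;>
      nlinarith [sq_nonneg u.1.imI, sq_nonneg u.1.imJ, sq_nonneg u.1.imK]
  set c := √m with hc
  have hcpos : 0 < c := Real.sqrt_pos.2 hpos
  have hc2 : c ^ 2 = m := Real.sq_sqrt hpos.le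
  let v : PureUnit := PureUnit.mk' (u.1.imI / c) (u.1.imJ / c) (u.1.imK / c) (by
    field_simp; rw [hc2])
  have huv : (u : ℍ[ℝ]) = (u.1.re : ℍ[ℝ]) + (c : ℍ[ℝ]) * v := by
    ext <;> simp [v] <;> field_simp
  refine ⟨v, ?_, ?_⟩
  · rw [conjPerm_fix_iff, huv, add_mul, mul_add, Quaternion.coe_commutes,
      ← mul_assoc (v : ℍ[ℝ]), ← Quaternion.coe_commutes c]
  · intro y hy
    rw [conjPerm_fix_iff, huv, add_mul, mul_add, Quaternion.coe_commutes u.1.re] at hy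
    have h2 := add_left_cancel hy
    rw [← mul_assoc, ← Quaternion.coe_commutes c (y : ℍ[ℝ]), mul_assoc, mul_assoc] at h2
    have hc0 : (c : ℍ[ℝ]) ≠ 0 := by
      intro h; exact hcpos.ne' (Quaternion.coe_injective h)
    exact eq_or_eq_neg_of_commute (mul_left_cancel₀ hc0 h2).symm

/-- A unit quaternion inducing a half-turn is pure. -/
theorem mul_self_of_orderOf_two (u : unitary ℍ[ℝ]) (h : orderOf (conjPerm u) = 2) :
    (u : ℍ[ℝ]) * u = -1 := by
  have h1 : conjPerm u ≠ 1 := by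
    intro e; rw [e, orderOf_one] at h; omega
  have h2 : conjPerm (u * u) = 1 := by
    rw [map_mul, ← pow_two, ← h, pow_orderOf_eq_one]
  rw [Ne, conjPerm_eq_one_iff] at h1
  rw [conjPerm_eq_one_iff] at h2
  have hre : u.1.re = 0 := by
    by_contra hr
    apply h1
    simp at h2
    obtain ⟨a, b, c⟩ := h2
    refine ⟨?_, ?_, ?_⟩
    · have : u.1.re * u.1.imI = 0 := by linarith
      exact (mul_eq_zero.1 this).resolve_left hr
    · have : u.1.re * u.1.imJ = 0 := by linarith
      exact (mul_eq_zero.1 this).resolve_left hr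
    · have : u.1.re * u.1.imK = 0 := by linarith
      exact (mul_eq_zero.1 this).resolve_left hr
  have hn := unitary_normSq u
  ext <;> simp [hre] <;> nlinarith

/-- The image of a homomorphism into the rotations of `PureUnit` is a rotation group in the sense
of `IsRotationAction`. -/
theorem isRotationAction_range {G : Type*} [Group G] (α : G →* Equiv.Perm PureUnit)
    (L : G → unitary ℍ[ℝ]) (hL : ∀ g, α g = conjPerm (L g)) :
    IsRotationAction α.range PureUnit where
  smul_neg := by
    rintro ⟨_, g, rfl⟩ x
    change α g (-x) = -(α g x)
    rw [hL]
    apply Subtype.ext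
    rw [PureUnit.coe_neg, conjPerm_apply, conjPerm_apply, PureUnit.coe_neg]
    simp
  neg_ne := by
    intro x hx
    have h1 := congrArg Subtype.val hx
    rw [PureUnit.coe_neg] at h1
    have h2 : (x : ℍ[ℝ]) = 0 := by
      have e : (2 : ℝ) • (x : ℍ[ℝ]) = 0 := by rw [two_smul]; nth_rw 1 [← h1]; simp
      exact (smul_eq_zero.1 e).resolve_left two_ne_zero
    have := x.norm_eq
    rw [h2] at this
    simp at this
  pole := by
    rintro ⟨_, g, rfl⟩ hg
    have h1 : conjPerm (L g) ≠ 1 := by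
      intro e; apply hg; apply Subtype.ext; rw [← hL] at e; exact e
    obtain ⟨v, hv, hu⟩ := conjPerm_pole _ h1
    rw [← hL] at hv hu
    exact ⟨v, hv, hu⟩

/-- Any two pure unit quaternions are conjugate. -/
theorem exists_intertwiner (a b : PureUnit) : ∃ x : ℍ[ℝ], x ≠ 0 ∧ (a : ℍ[ℝ]) * x = x * b := by
  by_contra hcon
  push Not at hcon
  have key : ∀ y : ℍ[ℝ], y = a * y * b := by
    intro y
    by_contra hy
    apply hcon (y - a * y * b) (sub_ne_zero.2 hy)
    have e1 : (a : ℍ[ℝ]) * (y - a * y * b) = a * y - (a * a) * y * b := by noncomm_ring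
    have e2 : (y - a * y * b) * (b : ℍ[ℝ]) = y * b - a * y * (b * b) := by noncomm_ring
    rw [e1, e2, a.2, b.2]
    noncomm_ring
  have h1 := key 1
  rw [mul_one] at h1
  have hb : (b : ℍ[ℝ]) = -a := by
    have : (a : ℍ[ℝ]) * 1 = (a * a) * b := by rw [mul_assoc, ← h1]
    rw [a.2, mul_one, neg_one_mul] at this
    rw [this, neg_neg]
  have hc : ∀ y : PureUnit, (a : ℍ[ℝ]) * y = y * a := by
    intro y
    have : (a : ℍ[ℝ]) * y = (a * a) * y * b := by
      conv_lhs => rw [key y]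
      noncomm_ring
    rw [this, a.2, hb]; noncomm_ring
  obtain ⟨e1, e2, e3⟩ := im_eq_zero_of_central hc
  have := a.norm_eq
  rw [e1, e2, e3] at this
  norm_num at this

/-- Cartan–Dieudonné in dimension four: an isometry of the quaternions is `x ↦ l x r` or
`x ↦ l x̄ r`. -/
theorem isometry_eq_mul (φ : ℍ[ℝ] ≃ₗᵢ[ℝ] ℍ[ℝ]) : ∃ l r : unitary ℍ[ℝ],
    (∀ x, φ x = l * x * r) ∨ (∀ x, φ x = l * star x * r) := by
  have fd : FiniteDimensional ℝ ℍ[ℝ] := inferInstance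
  obtain ⟨L, -, rfl⟩ := φ.reflections_generate_dim
  induction L with
  | nil => exact ⟨1, 1, Or.inl fun x => by simp⟩
  | cons v L ih =>
    obtain ⟨l, r, h⟩ := ih
    by_cases hv : v = 0
    · refine ⟨l, r, ?_⟩
      have e : (ℝ ∙ v)ᗮ.reflection = 1 := by
        ext1 x
        refine Submodule.reflection_mem_subspace_eq_self ?_
        simp [hv]
      rw [List.map_cons, List.prod_cons, e, one_mul]
      exact h
    set ψ := (L.map fun v => (ℝ ∙ v)ᗮ.reflection).prod with hψ
    have hn : ‖v‖ ≠ 0 := norm_ne_zero_iff.2 hv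
    let w : ℍ[ℝ] := (‖v‖⁻¹ : ℝ) • v
    have hns : Quaternion.normSq v = ‖v‖ ^ 2 := by
      rw [Quaternion.normSq_eq_norm_mul_self, pow_two]
    have hw0 : Quaternion.normSq w = 1 := by
      rw [Quaternion.normSq_smul, hns]
      field_simp
    have hw1 : star w * w = 1 := by
      rw [Quaternion.star_mul_self, hw0, Quaternion.coe_one]
    have hw2 : w * star w = 1 := by
      rw [Quaternion.self_mul_star, hw0, Quaternion.coe_one]
    let u : unitary ℍ[ℝ] := ⟨w, hw1, hw2⟩
    let n : unitary ℍ[ℝ] := ⟨-(u * star r : unitary ℍ[ℝ]), by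
      rw [Unitary.mem_iff, star_neg, neg_mul_neg, neg_mul_neg]
      exact ⟨unitary_star_mul _, unitary_mul_star _⟩⟩
    have hR : ∀ x : ℍ[ℝ], (ℝ ∙ v)ᗮ.reflection x = -(w * star x * w) := by
      intro x
      rw [Submodule.reflection_orthogonal_apply, Submodule.reflection_singleton_apply]
      congr 1
      have hvv : ‖v‖ ^ 2 = v.re ^ 2 + v.imI ^ 2 + v.imJ ^ 2 + v.imK ^ 2 := by
        rw [← hns, Quaternion.normSq_def']
      have e : w * star x * w = (‖v‖ ^ 2)⁻¹ • (v * star x * v) := by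
        simp only [w, smul_mul_assoc, mul_smul_comm, smul_smul]
        congr 1; field_simp
      have e2 : v * star x * v = (2 * ⟪v, x⟫) • v - (‖v‖ ^ 2) • x := by
        rw [hvv, Quaternion.inner_def]
        ext <;> simp <;> ring
      rw [e, e2, smul_sub, smul_smul, smul_smul, inv_mul_cancel₀ (by positivity), one_smul,
        two_nsmul, ← add_smul]
      congr 2
      simp
      field_simp
      ring
    have hmul : ∀ x, ((v :: L).map fun v => (ℝ ∙ v)ᗮ.reflection).prod x
        = -(w * star (ψ x) * w) := by
      intro x
      rw [List.map_cons, List.prod_cons, LinearIsometryEquiv.coe_mul,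
        Function.comp_apply, hR]
    rcases h with h | h
    · refine ⟨n, star l * u, Or.inr fun x => ?_⟩
      rw [hmul, h]
      change -(w * star _ * w) = -(w * star (r : ℍ[ℝ])) * _ * (star (l : ℍ[ℝ]) * w)
      simp [mul_assoc]
    · refine ⟨n, star l * u, Or.inl fun x => ?_⟩
      rw [hmul, h]
      change -(w * star _ * w) = -(w * star (r : ℍ[ℝ])) * _ * (star (l : ℍ[ℝ]) * w)
      simp [mul_assoc]

/-- A map `x ↦ l x̄ r` has a nonzero fixed vector. -/
theorem exists_fixed_of_star (l r : unitary ℍ[ℝ]) :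
    ∃ x : ℍ[ℝ], x ≠ 0 ∧ (l : ℍ[ℝ]) * star x * r = x := by
  obtain ⟨y, hy, hs⟩ : ∃ y : ℍ[ℝ], y ≠ 0 ∧ star y * (star (l : ℍ[ℝ]) * r) = y := by
    by_cases h : (1 : ℍ[ℝ]) + star (l : ℍ[ℝ]) * r = 0
    · have e : star (l : ℍ[ℝ]) * r = -1 := (eq_neg_of_add_eq_zero_right h)
      let y := PureUnit.mk' 1 0 0 (by norm_num)
      refine ⟨y, ?_, ?_⟩
      · intro h; simpa [y] using congrArg QuaternionAlgebra.imI h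
      · rw [e, y.star_eq, neg_mul_neg, mul_one]
    · refine ⟨_, h, ?_⟩
      have e : star (star (l : ℍ[ℝ]) * (r : ℍ[ℝ])) * (star (l : ℍ[ℝ]) * r) = 1 := by
        rw [star_mul, star_star, mul_assoc, ← mul_assoc (l : ℍ[ℝ]), unitary_mul_star, one_mul,
          unitary_star_mul]
      rw [star_add, star_one, add_mul, one_mul, e, add_comm]
  have hl0 : (l : ℍ[ℝ]) ≠ 0 := by
    intro h
    have := unitary_star_mul l
    rw [h] at this; simp at this
  refine ⟨l * y, mul_ne_zero hl0 hy, ?_⟩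
  rw [star_mul, mul_assoc, mul_assoc, hs]

theorem conj_left_unique {l r l' r' : unitary ℍ[ℝ]}
    (h : ∀ x : ℍ[ℝ], (l : ℍ[ℝ]) * x * star (r : ℍ[ℝ]) = l' * x * star (r' : ℍ[ℝ])) :
    conjPerm l = conjPerm l' ∧ conjPerm r = conjPerm r' := by
  have e : star (l : ℍ[ℝ]) * r = star (l' : ℍ[ℝ]) * r' := by
    have h0 := h (star (l' : ℍ[ℝ]) * r')
    have h1 : (l' : ℍ[ℝ]) * (star (l' : ℍ[ℝ]) * r') * star (r' : ℍ[ℝ]) = 1 := by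
      rw [← mul_assoc, unitary_mul_star, one_mul, unitary_mul_star]
    rw [h1] at h0
    calc star (l : ℍ[ℝ]) * r
        = star (l : ℍ[ℝ]) * (l * (star (l' : ℍ[ℝ]) * r') * star (r : ℍ[ℝ])) * r := by
          rw [h0, mul_one]
      _ = (star (l : ℍ[ℝ]) * l) * (star (l' : ℍ[ℝ]) * r') * (star (r : ℍ[ℝ]) * r) := by
          noncomm_ring
      _ = _ := by rw [unitary_star_mul, unitary_star_mul, one_mul, mul_one]
  constructor
  · ext1 y
    apply Subtype.ext
    rw [conjPerm_apply, conjPerm_apply]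
    have h0 := h (y * (star (l : ℍ[ℝ]) * r))
    calc (l : ℍ[ℝ]) * y * star (l : ℍ[ℝ])
        = l * (y * (star (l : ℍ[ℝ]) * r)) * star (r : ℍ[ℝ]) := by
          simp only [mul_assoc, unitary_mul_star, mul_one]
      _ = l' * (y * (star (l' : ℍ[ℝ]) * r')) * star (r' : ℍ[ℝ]) := by rw [h0, e]
      _ = _ := by simp only [mul_assoc, unitary_mul_star, mul_one]
  · ext1 y
    apply Subtype.ext
    rw [conjPerm_apply, conjPerm_apply]
    have h0 := h (star (l : ℍ[ℝ]) * r * y)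
    calc (r : ℍ[ℝ]) * y * star (r : ℍ[ℝ])
        = (l * star (l : ℍ[ℝ])) * r * y * star (r : ℍ[ℝ]) := by
          rw [unitary_mul_star, one_mul]
      _ = l * (star (l : ℍ[ℝ]) * r * y) * star (r : ℍ[ℝ]) := by noncomm_ring
      _ = l' * (star (l' : ℍ[ℝ]) * r' * y) * star (r' : ℍ[ℝ]) := by rw [h0, e]
      _ = (l' * star (l' : ℍ[ℝ])) * r' * y * star (r' : ℍ[ℝ]) := by noncomm_ring
      _ = _ := by rw [unitary_mul_star, one_mul]

/-! ### Extracting a harmonic invariant -/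

/-- The squared norm `Σ xᵢ²` on `ℝ⁴` as a polynomial. -/
noncomputable def sqPoly : MvPolynomial (Fin 4) ℝ := ∑ i, X i ^ 2

theorem eval_matSub {m : ℕ} (g : Matrix (Fin m) (Fin m) ℝ) (p : MvPolynomial (Fin m) ℝ)
    (x : Fin m → ℝ) : eval x (aeval (matSub g) p) = eval (g.mulVec x) p := by
  have : (eval x).comp (aeval (matSub g) : _ →ₐ[ℝ] _).toRingHom = eval (g.mulVec x) := by
    apply MvPolynomial.ringHom_ext
    · intro r; simp
    · intro i; simp [matSub, Matrix.mulVec, dotProduct]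
  exact congrArg (fun f => f p) this

/-- Chain rule for a linear substitution. -/
theorem pderiv_matSub {m : ℕ} (g : Matrix (Fin m) (Fin m) ℝ) (i : Fin m)
    (p : MvPolynomial (Fin m) ℝ) : pderiv i (aeval (matSub g) p)
      = ∑ j, C (g j i) * aeval (matSub g) (pderiv j p) := by
  induction p using MvPolynomial.induction_on with
  | C a => simp
  | add p q hp hq => simp only [map_add, hp, hq, mul_add, Finset.sum_add_distrib]
  | mul_X p k hp =>
    have hk : pderiv i (matSub g k) = C (g k i) := by
      simp only [matSub, map_sum, pderiv_C_mul, pderiv_X]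
      rw [Finset.sum_eq_single i]
      · simp
      · intro b _ hb; simp [hb.symm]
      · simp
    rw [map_mul, aeval_X, pderiv_mul, hp, hk]
    simp only [pderiv_mul, pderiv_X, map_add, map_mul, aeval_X, mul_add, Finset.sum_add_distrib]
    congr 1
    · rw [Finset.sum_mul]
      exact Finset.sum_congr rfl fun j _ => by ring
    · rw [Finset.sum_eq_single k]
      · simp; ring
      · intro b _ hb; simp [hb.symm]
      · simp

/-- The Laplacian commutes with orthogonal substitutions. -/
theorem polyLap_matSub {m : ℕ} (g : Matrix (Fin m) (Fin m) ℝ) (hg : g * g.transpose = 1)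
    (p : MvPolynomial (Fin m) ℝ) :
    polyLap (aeval (matSub g) p) = aeval (matSub g) (polyLap p) := by
  have hjk : ∀ j k, ∑ i, g j i * g k i = if j = k then 1 else 0 := by
    intro j k
    have := congrFun (congrFun hg j) k
    simpa [Matrix.mul_apply, Matrix.one_apply] using this
  simp only [polyLap, pderiv_matSub, map_sum, pderiv_C_mul]
  rw [Finset.sum_comm]
  refine Finset.sum_congr rfl fun j _ => ?_
  simp only [Finset.mul_sum]
  rw [Finset.sum_comm, Finset.sum_eq_single j]
  · have : ∑ i, C (g j i) * (C (g j i) * aeval (matSub g) (pderiv j (pderiv j p)))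
        = C (∑ i, g j i * g j i) * aeval (matSub g) (pderiv j (pderiv j p)) := by
      rw [map_sum, Finset.sum_mul]
      exact Finset.sum_congr rfl fun i _ => by rw [C_mul, mul_assoc]
    rw [this, hjk]; simp
  · intro k _ hk
    have : ∑ i, C (g j i) * (C (g k i) * aeval (matSub g) (pderiv k (pderiv j p)))
        = C (∑ i, g j i * g k i) * aeval (matSub g) (pderiv k (pderiv j p)) := by
      rw [map_sum, Finset.sum_mul]
      exact Finset.sum_congr rfl fun i _ => by rw [C_mul, mul_assoc]
    rw [this, hjk]; simp [hk.symm]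
  · simp

theorem polyLap_sub (p q : MvPolynomial (Fin 4) ℝ) :
    polyLap (p - q) = polyLap p - polyLap q := by
  simp [polyLap, Finset.sum_sub_distrib]

theorem polyLap_C_mul (c : ℝ) (p : MvPolynomial (Fin 4) ℝ) :
    polyLap (C c * p) = C c * polyLap p := by
  simp [polyLap, Finset.mul_sum]

theorem polyLap_sqPoly_pow (k : ℕ) :
    polyLap (sqPoly ^ (k + 1)) = C (4 * (k + 1) * (k + 2) : ℝ) * sqPoly ^ k := by
  have hC : ∀ n : ℕ, [n.AtLeastTwo] → C (OfNat.ofNat n : ℝ)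
      = (OfNat.ofNat n : MvPolynomial (Fin 4) ℝ) := fun n _ => map_ofNat C n
  have h1 : ∀ i, pderiv i sqPoly = 2 * X i := by
    intro i
    simp only [sqPoly, map_sum, pderiv_pow, pderiv_X]
    rw [Finset.sum_eq_single i]
    · simp
    · intro b _ hb; simp [hb.symm]
    · simp
  have h2 : ∀ i, pderiv i (pderiv i (sqPoly ^ (k + 1)))
      = (2 * (k + 1) : MvPolynomial (Fin 4) ℝ) * (sqPoly ^ k)
        + (4 * (k + 1) * k : MvPolynomial (Fin 4) ℝ) * sqPoly ^ (k - 1) * X i ^ 2 := by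
    intro i
    have e : pderiv i (sqPoly ^ (k + 1))
        = C (2 * (k + 1) : ℝ) * (sqPoly ^ k * X i) := by
      rw [pderiv_pow, h1]; simp [hC]; ring
    rw [e, pderiv_C_mul, pderiv_mul, pderiv_pow, h1, pderiv_X_self]
    simp [hC]
    ring
  have h3 : (k : MvPolynomial (Fin 4) ℝ) * sqPoly ^ (k - 1) * sqPoly = k * sqPoly ^ k := by
    cases k with
    | zero => simp
    | succ n => simp [pow_succ, mul_assoc]
  simp only [polyLap, h2, Finset.sum_add_distrib, ← Finset.mul_sum]
  change _ + _ * sqPoly = _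
  have : (4 * (k + 1) * k : MvPolynomial (Fin 4) ℝ) * sqPoly ^ (k - 1) * sqPoly
      = 4 * (k + 1) * (k * sqPoly ^ k) := by rw [← h3]; ring
  rw [this]
  simp [hC]
  ring

theorem sqPoly_isHomogeneous : sqPoly.IsHomogeneous 2 :=
  IsHomogeneous.sum _ _ _ fun i _ => by simpa using (isHomogeneous_X ℝ i).pow 2

theorem polyLap_isHomogeneous {p : MvPolynomial (Fin 4) ℝ} {n : ℕ} (hp : p.IsHomogeneous n) :
    (polyLap p).IsHomogeneous (n - 2) :=
  IsHomogeneous.sum _ _ _ fun _ _ => hp.pderiv.pderiv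

theorem eval_sqPoly (x : Fin 4 → ℝ) : eval x sqPoly = x ⬝ᵥ x := by
  simp [sqPoly, dotProduct, pow_two]

theorem dotProduct_mulVec_orthogonal {g : Matrix (Fin 4) (Fin 4) ℝ} (hg : g * g.transpose = 1)
    (x : Fin 4 → ℝ) : g.mulVec x ⬝ᵥ g.mulVec x = x ⬝ᵥ x := by
  have hg' : g.transpose * g = 1 := mul_eq_one_comm.1 hg
  rw [Matrix.dotProduct_mulVec, Matrix.vecMul_mulVec, hg', Matrix.vecMul_one]

theorem sqPoly_matSub {g : Matrix (Fin 4) (Fin 4) ℝ} (hg : g * g.transpose = 1) :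
    aeval (matSub g) sqPoly = sqPoly := by
  apply MvPolynomial.funext
  intro x
  rw [eval_matSub, eval_sqPoly, eval_sqPoly, dotProduct_mulVec_orthogonal hg]

/-- A homogeneous invariant of positive even degree that is not a multiple of a power of the
squared norm yields a harmonic invariant of no larger positive degree: apply the Laplacian until the
result is a multiple `c * sqPoly ^ k`, and correct the preceding polynomial by a multiple of
`sqPoly ^ (k + 1)`. -/
theorem exists_harmonic (S : Set (Matrix (Fin 4) (Fin 4) ℝ))
    (hS : ∀ g ∈ S, g * g.transpose = 1) (k : ℕ) : ∀ p : MvPolynomial (Fin 4) ℝ,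
    p.IsHomogeneous (2 * (k + 1)) → (∀ g ∈ S, aeval (matSub g) p = p) →
    (∀ c : ℝ, p ≠ C c * sqPoly ^ (k + 1)) →
    ∃ (q : MvPolynomial (Fin 4) ℝ) (d : ℕ), q ≠ 0 ∧ 1 ≤ d ∧ d ≤ 2 * (k + 1) ∧
      q.IsHomogeneous d ∧ IsHarmonic q ∧ ∀ g ∈ S, aeval (matSub g) q = q := by
  induction k with
  | zero =>
    intro p hp hinv hc
    have h0 := polyLap_isHomogeneous hp
    rw [show 2 * (0 + 1) - 2 = 0 from rfl] at h0
    obtain ⟨a, ha⟩ : ∃ a, polyLap p = C a :=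
      ⟨_, totalDegree_eq_zero_iff_eq_C.1 (Nat.le_zero.1 h0.totalDegree_le)⟩
    refine ⟨p - C (a / 8) * sqPoly ^ 1, 2, sub_ne_zero.2 (hc _), by norm_num, by norm_num,
      ?_, ?_, ?_⟩
    · refine IsHomogeneous.sub hp ?_
      simpa using (isHomogeneous_C _ (a / 8)).mul sqPoly_isHomogeneous
    · rw [IsHarmonic, polyLap_sub, polyLap_C_mul, polyLap_sqPoly_pow, ha, pow_zero, mul_one,
        ← C_mul, ← C_sub, ← C_0]
      congr 1; push_cast; ring
    · intro g hg
      rw [map_sub, hinv g hg, map_mul, map_pow, sqPoly_matSub (hS g hg), aeval_C, algebraMap_eq]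
  | succ k ih =>
    intro p hp hinv hc
    by_cases hL : ∃ a : ℝ, polyLap p = C a * sqPoly ^ (k + 1)
    · obtain ⟨a, ha⟩ := hL
      refine ⟨p - C (a / (4 * (k + 2) * (k + 3))) * sqPoly ^ (k + 2), 2 * (k + 2),
        sub_ne_zero.2 (hc _), by omega, by omega, ?_, ?_, ?_⟩
      · refine IsHomogeneous.sub hp ?_
        simpa using (isHomogeneous_C _ _).mul (sqPoly_isHomogeneous.pow (k + 2))
      · rw [IsHarmonic, polyLap_sub, polyLap_C_mul, polyLap_sqPoly_pow, ha, ← mul_assoc, ← C_mul,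
          sub_eq_zero]
        congr 2
        have h2 : (k : ℝ) + 2 ≠ 0 := by positivity
        have h3 : (k : ℝ) + 3 ≠ 0 := by positivity
        push_cast
        field_simp
        ring
      · intro g hg
        rw [map_sub, hinv g hg, map_mul, map_pow, sqPoly_matSub (hS g hg), aeval_C, algebraMap_eq]
    · push Not at hL
      obtain ⟨q, d, h1, h2, h3, h4⟩ := ih (polyLap p) (polyLap_isHomogeneous hp)
        (fun g hg => by rw [← polyLap_matSub g (hS g hg), hinv g hg]) hL
      exact ⟨q, d, h1, h2, by omega, h4⟩

/-! ### The degree-twelve invariant -/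

theorem sixth_pow_identity (a b c : ℝ) :
    40 * (a ^ 6 + b ^ 6 + c ^ 6)
      + 4 * ((a + b) ^ 6 + (a - b) ^ 6 + (a + c) ^ 6 + (a - c) ^ 6 + (b + c) ^ 6 + (b - c) ^ 6)
      + ((a + b + c) ^ 6 + (a + b - c) ^ 6 + (a - b + c) ^ 6 + (a - b - c) ^ 6)
      = 60 * (a ^ 2 + b ^ 2 + c ^ 2) ^ 3 := by
  ring

/-- A cubature formula of degree six on the sphere: its nodes are, up to sign, the vertices, edge
midpoints and face centres of an octahedron, projected to the sphere. In particular the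
mean value of `y ↦ ⟨y, u⟩⁶` is
`60 / 420 = 1 / 7`. -/
theorem exists_cubature : ∃ (w : Fin 13 → ℝ) (y : Fin 13 → PureUnit),
    ∑ k, w k = 420 ∧ ∀ u : PureUnit, ∑ k, w k * (y k).dot u ^ 6 = 60 := by
  obtain ⟨s, hs⟩ : ∃ s : ℝ, s ^ 2 = 1 / 2 := ⟨√(1 / 2), Real.sq_sqrt (by norm_num)⟩
  obtain ⟨t, ht⟩ : ∃ t : ℝ, t ^ 2 = 1 / 3 := ⟨√(1 / 3), Real.sq_sqrt (by norm_num)⟩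
  have hs6 : s ^ 6 = 1 / 8 := by rw [show s ^ 6 = (s ^ 2) ^ 3 by ring, hs]; norm_num
  have ht6 : t ^ 6 = 1 / 27 := by rw [show t ^ 6 = (t ^ 2) ^ 3 by ring, ht]; norm_num
  refine ⟨![40, 40, 40, 32, 32, 32, 32, 32, 32, 27, 27, 27, 27],
    ![PureUnit.mk' 1 0 0 (by norm_num), PureUnit.mk' 0 1 0 (by norm_num),
      PureUnit.mk' 0 0 1 (by norm_num),
      PureUnit.mk' s s 0 (by linarith), PureUnit.mk' s (-s) 0 (by linarith),
      PureUnit.mk' s 0 s (by linarith), PureUnit.mk' s 0 (-s) (by linarith),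
      PureUnit.mk' 0 s s (by linarith), PureUnit.mk' 0 s (-s) (by linarith),
      PureUnit.mk' t t t (by linarith), PureUnit.mk' t t (-t) (by linarith),
      PureUnit.mk' t (-t) t (by linarith), PureUnit.mk' t (-t) (-t) (by linarith)], ?_, ?_⟩
  · simp [Fin.sum_univ_succ]; norm_num
  · intro u
    have key := sixth_pow_identity u.1.imI u.1.imJ u.1.imK
    rw [u.norm_eq] at key
    simp only [Fin.sum_univ_succ, PureUnit.dot, Fin.sum_univ_zero, Matrix.cons_val_zero,
      Matrix.cons_val_succ, PureUnit.imI_mk', PureUnit.imJ_mk', PureUnit.imK_mk']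
    generalize u.1.imI = a at *
    generalize u.1.imJ = b at *
    generalize u.1.imK = c at *
    have e : ∀ x y : ℝ, (x * y) ^ 6 = x ^ 6 * y ^ 6 := fun x y => mul_pow x y 6
    have h1 := e s (a + b)
    have h2 := e s (a - b)
    have h3 := e s (a + c)
    have h4 := e s (a - c)
    have h5 := e s (b + c)
    have h6 := e s (b - c)
    have k1 := e t (a + b + c)
    have k2 := e t (a + b - c)
    have k3 := e t (a - b + c)
    have k4 := e t (a - b - c)
    rw [hs6] at h1 h2 h3 h4 h5 h6
    rw [ht6] at k1 k2 k3 k4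
    rw [show s * a + s * b + 0 * c = s * (a + b) by ring,
      show s * a + -s * b + 0 * c = s * (a - b) by ring,
      show s * a + 0 * b + s * c = s * (a + c) by ring,
      show s * a + 0 * b + -s * c = s * (a - c) by ring,
      show 0 * a + s * b + s * c = s * (b + c) by ring,
      show 0 * a + s * b + -s * c = s * (b - c) by ring,
      show t * a + t * b + t * c = t * (a + b + c) by ring,
      show t * a + t * b + -t * c = t * (a + b - c) by ring,
      show t * a + -t * b + t * c = t * (a - b + c) by ring,
      show t * a + -t * b + -t * c = t * (a - b - c) by ring,
      h1, h2, h3, h4, h5, h6, k1, k2, k3, k4]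
    linarith

theorem matSub_isHomogeneous {m : ℕ} (g : Matrix (Fin m) (Fin m) ℝ) (i : Fin m) :
    (matSub g i).IsHomogeneous 1 :=
  IsHomogeneous.sum _ _ _ fun j _ => by
    simpa using (isHomogeneous_C _ (g i j)).mul (isHomogeneous_X ℝ j)

theorem aeval_matSub_isHomogeneous {m n : ℕ} (g : Matrix (Fin m) (Fin m) ℝ)
    {p : MvPolynomial (Fin m) ℝ} (hp : p.IsHomogeneous n) :
    (aeval (matSub g) p).IsHomogeneous n := by
  simpa using hp.aeval (matSub g) (matSub_isHomogeneous g)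

/-- The averaging step. Here `γ` describes the action of `G` on the base of a Hopf fibration
preserved by `G`, and `Q` is the height function of that fibration in the direction `v`. For `v` an
axis whose stabiliser has index at most six, the sum over `G` of the translates of `Q ^ 6` is not
a multiple of `sqPoly ^ 6`: otherwise it would be constant on the base, with value `|G| / 7` by
cubature, whereas the stabiliser alone contributes at least `|G| / 6` at `v`. -/
theorem exists_degree_twelve (G : Subgroup (Matrix.orthogonalGroup (Fin 4) ℝ)) [Finite G]
    (γ : G →* Equiv.Perm PureUnit) (hγ : IsRotationAction γ.range PureUnit)
    (hdot : ∀ g y v, (γ g y).dot v = y.dot ((γ g)⁻¹ v))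
    (hQ : ∀ v : PureUnit, ∃ Q : MvPolynomial (Fin 4) ℝ, Q.IsHomogeneous 2 ∧
      ∀ y : PureUnit, ∃ x : Fin 4 → ℝ, x ⬝ᵥ x ≠ 0 ∧ ∀ g : G,
        eval ((g.1 : Matrix (Fin 4) (Fin 4) ℝ).mulVec x) Q = (x ⬝ᵥ x) * (γ g y).dot v) :
    ∃ p : MvPolynomial (Fin 4) ℝ, p.IsHomogeneous 12 ∧
      (∀ g ∈ G, aeval (matSub (g : Matrix (Fin 4) (Fin 4) ℝ)) p = p) ∧
      ∀ c : ℝ, p ≠ C c * sqPoly ^ 6 := by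
  classical
  have := Fintype.ofFinite G
  have : Finite γ.range := inferInstance
  obtain ⟨v, hv⟩ := hγ.exists_index_le_six
  obtain ⟨Q, hQ2, hQx⟩ := hQ v
  let M : G → Matrix (Fin 4) (Fin 4) ℝ := fun g => g.1.1
  refine ⟨∑ g : G, (aeval (matSub (M g)) Q) ^ 6, ?_, ?_, ?_⟩
  · exact IsHomogeneous.sum _ _ _ fun g _ => (aeval_matSub_isHomogeneous _ hQ2).pow 6
  · intro h hh
    apply MvPolynomial.funext
    intro x
    rw [eval_matSub, map_sum, map_sum]
    simp only [map_pow, eval_matSub, Matrix.mulVec_mulVec]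
    exact Fintype.sum_equiv (Equiv.mulRight (⟨h, hh⟩ : G)) _ _ fun g => rfl
  · intro c hc
    have hF : ∀ y : PureUnit, ∑ g : G, (γ g y).dot v ^ 6 = c := by
      intro y
      obtain ⟨x, hx, hxg⟩ := hQx y
      have h1 := congrArg (eval x) hc
      rw [map_sum, map_mul, eval_C, map_pow, eval_sqPoly] at h1
      simp only [map_pow, eval_matSub] at h1
      have h2 : ∑ g : G, (eval ((M g).mulVec x) Q) ^ 6
          = (x ⬝ᵥ x) ^ 6 * ∑ g : G, (γ g y).dot v ^ 6 := by
        rw [Finset.mul_sum]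
        exact Finset.sum_congr rfl fun g _ => by rw [hxg g, mul_pow]
      rw [h2, mul_comm c] at h1
      exact mul_left_cancel₀ (pow_ne_zero 6 hx) h1
    have hcub : 420 * c = 60 * (Nat.card G : ℝ) := by
      obtain ⟨w, y, hw, hwy⟩ := exists_cubature
      rw [← hw, Finset.sum_mul]
      calc ∑ k, w k * c = ∑ k, ∑ g : G, w k * (y k).dot ((γ g)⁻¹ v) ^ 6 := by
            refine Finset.sum_congr rfl fun k _ => ?_
            rw [← hF (y k), Finset.mul_sum]
            simp only [hdot]
        _ = ∑ g : G, 60 := by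
            rw [Finset.sum_comm]
            exact Finset.sum_congr rfl fun g _ => hwy _
        _ = 60 * (Nat.card G : ℝ) := by simp [mul_comm]
    let K : Subgroup G := (hγ.axisStab v).comap γ.rangeRestrict
    have hK6 : K.index ≤ 6 := by
      rwa [Subgroup.index_comap_of_surjective _ γ.rangeRestrict_surjective]
    have hKG : Nat.card G ≤ Nat.card K * 6 := by
      rw [← K.card_mul_index]
      exact Nat.mul_le_mul_left _ hK6
    have hKc : (Nat.card K : ℝ) ≤ c := by
      have h1 : ∀ g ∈ K, (γ g v).dot v ^ 6 = 1 := by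
        intro g hg
        rcases hg with hg | hg
        · have : γ g v = v := hg
          rw [this, PureUnit.dot_self]; norm_num
        · have : γ g v = -v := hg
          rw [this, PureUnit.dot_neg_left, PureUnit.dot_self]; norm_num
      rw [← hF v]
      calc (Nat.card K : ℝ) = ∑ g ∈ Finset.univ.filter (· ∈ K), (1 : ℝ) := by
            rw [Finset.sum_const, nsmul_eq_mul, mul_one, Nat.card_eq_fintype_card,
              Fintype.card_subtype]
        _ = ∑ g ∈ Finset.univ.filter (· ∈ K), (γ g v).dot v ^ 6 :=
            Finset.sum_congr rfl fun g hg => (h1 g (Finset.mem_filter.1 hg).2).symm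
        _ ≤ ∑ g : G, (γ g v).dot v ^ 6 :=
            Finset.sum_le_sum_of_subset_of_nonneg (Finset.subset_univ _)
              fun g _ _ => by positivity
    have hpos : 0 < (Nat.card G : ℝ) := by exact_mod_cast Nat.card_pos
    have hKG' : (Nat.card G : ℝ) ≤ Nat.card K * 6 := by exact_mod_cast hKG
    linarith

/-! ### Isometries of `ℝ⁴` as quaternionic multiplications -/

/-- The identification of the quaternions with `ℝ⁴`. -/
def toVec (x : ℍ[ℝ]) : Fin 4 → ℝ := ![x.re, x.imI, x.imJ, x.imK]

/-- The inverse of `toVec`, as a linear map. -/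
def ofVec : (Fin 4 → ℝ) →ₗ[ℝ] ℍ[ℝ] where
  toFun v := ⟨v 0, v 1, v 2, v 3⟩
  map_add' _ _ := rfl
  map_smul' _ _ := by ext <;> simp <;> rfl

theorem ofVec_toVec (x : ℍ[ℝ]) : ofVec (toVec x) = x := rfl

theorem toVec_ofVec (v : Fin 4 → ℝ) : toVec (ofVec v) = v := by
  funext i; fin_cases i <;> rfl

theorem toVec_dot (x : ℍ[ℝ]) : toVec x ⬝ᵥ toVec x = Quaternion.normSq x := by
  rw [Quaternion.normSq_def']
  simp [toVec, dotProduct, Fin.sum_univ_four]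
  ring

theorem orthogonal_eq_mul {g : Matrix (Fin 4) (Fin 4) ℝ} (hg : g * g.transpose = 1) :
    ∃ l r : unitary ℍ[ℝ], (∀ x, g.mulVec (toVec x) = toVec (l * x * star (r : ℍ[ℝ]))) ∨
      (∀ x, g.mulVec (toVec x) = toVec (l * star x * star (r : ℍ[ℝ]))) := by
  let f : ℍ[ℝ] →ₗ[ℝ] ℍ[ℝ] :=
    { toFun := fun x => ofVec (g.mulVec (toVec x))
      map_add' := by
        intro x y
        rw [← map_add, ← Matrix.mulVec_add]
        congr 2
      map_smul' := by
        intro a x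
        rw [RingHom.id_apply, ← map_smul, ← Matrix.mulVec_smul]
        congr 2 }
  have hf : ∀ x, ‖f x‖ = ‖x‖ := by
    intro x
    have h1 : Quaternion.normSq (f x) = Quaternion.normSq x := by
      rw [← toVec_dot, ← toVec_dot]
      change toVec (ofVec _) ⬝ᵥ toVec (ofVec _) = _
      rw [toVec_ofVec, dotProduct_mulVec_orthogonal hg]
    rw [Quaternion.normSq_eq_norm_mul_self, Quaternion.normSq_eq_norm_mul_self] at h1
    exact (mul_self_inj (norm_nonneg _) (norm_nonneg _)).1 h1
  let φ : ℍ[ℝ] ≃ₗᵢ[ℝ] ℍ[ℝ] := LinearIsometry.toLinearIsometryEquiv ⟨f, hf⟩ rfl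
  obtain ⟨l, r, h⟩ := isometry_eq_mul φ
  have hφ : ∀ x, g.mulVec (toVec x) = toVec (φ x) := fun x => (toVec_ofVec _).symm
  refine ⟨l, star r, ?_⟩
  rw [Unitary.coe_star, star_star]
  exact h.imp (fun h x => by rw [hφ, h]) (fun h x => by rw [hφ, h])

/-- Quadratic forms on the quaternions are homogeneous polynomials of degree two. -/
theorem exists_quadratic (B : ℍ[ℝ] →ₗ[ℝ] ℍ[ℝ] →ₗ[ℝ] ℝ) :
    ∃ Q : MvPolynomial (Fin 4) ℝ, Q.IsHomogeneous 2 ∧ ∀ x, eval (toVec x) Q = B x x := by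
  let b : Fin 4 → ℍ[ℝ] := fun i => ofVec (Pi.single i 1)
  refine ⟨∑ i, ∑ j, C (B (b i) (b j)) * (X i * X j), ?_, ?_⟩
  · refine IsHomogeneous.sum _ _ _ fun i _ => IsHomogeneous.sum _ _ _ fun j _ => ?_
    simpa using (isHomogeneous_C _ (B (b i) (b j))).mul
      ((isHomogeneous_X ℝ i).mul (isHomogeneous_X ℝ j))
  · intro x
    have hx : x = ∑ i, toVec x i • b i := by
      have : toVec x = ∑ i, toVec x i • (Pi.single i 1 : Fin 4 → ℝ) := by
        simpa using (pi_eq_sum_univ' (toVec x))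
      conv_lhs => rw [← ofVec_toVec x, this, map_sum]
      simp [b]
    conv_rhs => rw [hx]
    simp only [map_sum, map_smul, LinearMap.sum_apply, LinearMap.smul_apply, smul_eq_mul,
      map_mul, eval_C, eval_X, Finset.mul_sum]
    rw [Finset.sum_comm]
    exact Finset.sum_congr rfl fun i _ => Finset.sum_congr rfl fun j _ => by ring

/-! ### Hopf maps -/

/-- The height function of the Hopf map `x ↦ x̄ e x`. -/
theorem exists_hopf_left (e v : PureUnit) : ∃ Q : MvPolynomial (Fin 4) ℝ, Q.IsHomogeneous 2 ∧
    ∀ x : ℍ[ℝ], eval (toVec x) Q = -(star x * e * x * v).re := by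
  obtain ⟨Q, h2, h⟩ := exists_quadratic
    (LinearMap.mk₂ ℝ (fun x y : ℍ[ℝ] => -(star x * e * y * v).re)
      (fun x y z => by simp only [star_add, add_mul, Quaternion.re_add]; ring)
      (fun a x y => by
        simp only [Quaternion.star_smul, smul_mul_assoc, Quaternion.re_smul, smul_eq_mul]; ring)
      (fun x y z => by simp only [mul_add, add_mul, Quaternion.re_add]; ring)
      (fun a x y => by
        simp only [mul_smul_comm, smul_mul_assoc, Quaternion.re_smul, smul_eq_mul]; ring))
  exact ⟨Q, h2, h⟩

/-- The height function of the Hopf map `x ↦ x e x̄`. -/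
theorem exists_hopf_right (e v : PureUnit) : ∃ Q : MvPolynomial (Fin 4) ℝ, Q.IsHomogeneous 2 ∧
    ∀ x : ℍ[ℝ], eval (toVec x) Q = -(x * e * star x * v).re := by
  obtain ⟨Q, h2, h⟩ := exists_quadratic
    (LinearMap.mk₂ ℝ (fun x y : ℍ[ℝ] => -(x * e * star y * v).re)
      (fun x y z => by simp only [add_mul, Quaternion.re_add]; ring)
      (fun a x y => by simp only [smul_mul_assoc, Quaternion.re_smul, smul_eq_mul]; ring)
      (fun x y z => by simp only [star_add, mul_add, add_mul, Quaternion.re_add]; ring)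
      (fun a x y => by
        simp only [Quaternion.star_smul, mul_smul_comm, smul_mul_assoc, Quaternion.re_smul,
          smul_eq_mul]
        ring))
  exact ⟨Q, h2, h⟩

theorem hopf_left_eq {e y v : PureUnit} {l r : unitary ℍ[ℝ]} {x : ℍ[ℝ]}
    (hx : (e : ℍ[ℝ]) * x = x * y) (he : conjPerm l e = e) :
    -(star (l * x * star (r : ℍ[ℝ])) * e * (l * x * star (r : ℍ[ℝ])) * v).re
      = Quaternion.normSq x * (conjPerm r y).dot v := by
  rw [conjPerm_fix_iff] at he
  have h1 : star (l * x * star (r : ℍ[ℝ])) * e * (l * x * star (r : ℍ[ℝ]))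
      = Quaternion.normSq x • ((conjPerm r y : PureUnit) : ℍ[ℝ]) := by
    calc star (l * x * star (r : ℍ[ℝ])) * e * (l * x * star (r : ℍ[ℝ]))
        = r * star x * star (l : ℍ[ℝ]) * (e * l) * x * star (r : ℍ[ℝ]) := by
          rw [star_mul, star_mul, star_star]; noncomm_ring
      _ = r * star x * (star (l : ℍ[ℝ]) * l) * (e * x) * star (r : ℍ[ℝ]) := by
          rw [← he]; noncomm_ring
      _ = r * (star x * x) * y * star (r : ℍ[ℝ]) := by
          rw [unitary_star_mul, hx]; noncomm_ring
      _ = _ := by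
          rw [Quaternion.star_mul_self, ← Quaternion.coe_commutes, conjPerm_apply, mul_assoc,
            mul_assoc, Quaternion.coe_mul_eq_smul, mul_assoc]
  rw [h1, PureUnit.dot_eq, smul_mul_assoc, Quaternion.re_smul, smul_eq_mul, mul_neg]

theorem hopf_right_eq {e y v : PureUnit} {l r : unitary ℍ[ℝ]} {x : ℍ[ℝ]}
    (hx : (y : ℍ[ℝ]) * x = x * e) (he : conjPerm r e = e) :
    -(l * x * star (r : ℍ[ℝ]) * e * star (l * x * star (r : ℍ[ℝ])) * v).re
      = Quaternion.normSq x * (conjPerm l y).dot v := by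
  rw [conjPerm_fix_iff] at he
  have h1 : l * x * star (r : ℍ[ℝ]) * e * star (l * x * star (r : ℍ[ℝ]))
      = Quaternion.normSq x • ((conjPerm l y : PureUnit) : ℍ[ℝ]) := by
    calc l * x * star (r : ℍ[ℝ]) * e * star (l * x * star (r : ℍ[ℝ]))
        = l * x * star (r : ℍ[ℝ]) * (e * r) * star x * star (l : ℍ[ℝ]) := by
          rw [star_mul, star_mul, star_star]; noncomm_ring
      _ = l * x * (star (r : ℍ[ℝ]) * r) * e * star x * star (l : ℍ[ℝ]) := by
          rw [← he]; noncomm_ring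
      _ = l * (x * e) * star x * star (l : ℍ[ℝ]) := by
          rw [unitary_star_mul]; noncomm_ring
      _ = l * y * (x * star x) * star (l : ℍ[ℝ]) := by
          rw [← hx]; noncomm_ring
      _ = _ := by
          rw [Quaternion.self_mul_star, ← Quaternion.coe_commutes, conjPerm_apply, mul_assoc,
            Quaternion.coe_mul_eq_smul]
  rw [h1, PureUnit.dot_eq, smul_mul_assoc, Quaternion.re_smul, smul_eq_mul, mul_neg]

/-- For every finite subgroup `G` of `SO(4)` (a subgroup of the orthogonal group all of whose
elements have determinant one) acting freely on the unit sphere `S³ ⊂ ℝ⁴`, there is a nonzero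
`G`-invariant harmonic polynomial on `ℝ⁴`, homogeneous of degree `d` with `1 ≤ d ≤ 12`
(so the first nonzero eigenvalue of the Laplacian on `S³/G` is at most `12·(12+3−1) = 168`). -/
theorem free_quotient_S3_eigenvalue_bound
    (G : Subgroup (Matrix.orthogonalGroup (Fin 4) ℝ)) (hfin : Finite G)
    (hdet : ∀ g ∈ G, ((g : Matrix (Fin 4) (Fin 4) ℝ)).det = 1)
    (hfree : ∀ g ∈ G, g ≠ 1 → ∀ v : Fin 4 → ℝ,
      Matrix.mulVec (g : Matrix (Fin 4) (Fin 4) ℝ) v = v → v = 0) :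
    ∃ (p : MvPolynomial (Fin 4) ℝ) (d : ℕ), p ≠ 0 ∧ 1 ≤ d ∧ d ≤ 12 ∧
      p.IsHomogeneous d ∧ IsHarmonic p ∧
      ∀ g ∈ G, aeval (matSub (g : Matrix (Fin 4) (Fin 4) ℝ)) p = p := by
  have horth : ∀ g : G, (g.1 : Matrix (Fin 4) (Fin 4) ℝ) * (g.1.1).transpose = 1 := fun g =>
    (Matrix.mem_orthogonalGroup_iff (Fin 4) ℝ).1 g.1.2
  have hact : ∀ g : G, ∃ l r : unitary ℍ[ℝ],
      ∀ x, g.1.1.mulVec (toVec x) = toVec (l * x * star (r : ℍ[ℝ])) := by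
    intro g
    by_cases h1 : g = 1
    · exact ⟨1, 1, fun x => by simp [h1]⟩
    obtain ⟨l, r, h | h⟩ := orthogonal_eq_mul (horth g)
    · exact ⟨l, r, h⟩
    -- The second kind fixes a nonzero vector, so freeness rules it out.
    · obtain ⟨x, hx0, hx⟩ := exists_fixed_of_star l (star r)
      have h2 := hfree g g.2 (fun e => h1 (Subtype.ext e)) (toVec x) (by
        rw [h, ← Unitary.coe_star, hx])
      exact absurd (by rw [← ofVec_toVec x, h2, map_zero]) hx0
  choose L R hLR using hact
  have hinj : ∀ x y, toVec x = toVec y → x = y := fun x y h => by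
    rw [← ofVec_toVec x, h, ofVec_toVec]
  have hmul : ∀ g h, conjPerm (L (g * h)) = conjPerm (L g * L h) ∧
      conjPerm (R (g * h)) = conjPerm (R g * R h) := by
    intro g h
    refine conj_left_unique fun x => hinj _ _ ?_
    rw [← hLR]
    change (g.1.1 * h.1.1).mulVec _ = _
    rw [← Matrix.mulVec_mulVec, hLR, hLR]
    congr 1
    change _ = (L g * L h : ℍ[ℝ]) * x * star (R g * R h : ℍ[ℝ])
    rw [star_mul]
    noncomm_ring
  let α : G →* Equiv.Perm PureUnit := MonoidHom.mk' (fun g => conjPerm (L g)) fun g h => by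
    rw [(hmul g h).1, map_mul]
  let β : G →* Equiv.Perm PureUnit := MonoidHom.mk' (fun g => conjPerm (R g)) fun g h => by
    rw [(hmul g h).2, map_mul]
  have hα := isRotationAction_range α L fun _ => rfl
  have hβ := isRotationAction_range β R fun _ => rfl
  have hP : ∀ g, orderOf (α g) = 2 → orderOf (β g) = 2 → False := by
    intro g h1 h2
    obtain ⟨x, hx0, hx⟩ := exists_intertwiner ⟨L g, mul_self_of_orderOf_two _ h1⟩
      ⟨R g, mul_self_of_orderOf_two _ h2⟩
    have hg1 : g ≠ 1 := by
      rintro rfl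
      rw [map_one, orderOf_one] at h1
      omega
    have h3 := hfree g g.2 (fun e => hg1 (Subtype.ext e)) (toVec x) (by
      rw [hLR]
      change (L g : ℍ[ℝ]) * x = x * R g at hx
      rw [hx, mul_assoc, unitary_mul_star, mul_one])
    exact hx0 (by rw [← ofVec_toVec x, h3, map_zero])
  obtain ⟨p, hp, hinv, hne⟩ : ∃ p : MvPolynomial (Fin 4) ℝ, p.IsHomogeneous 12 ∧
      (∀ g ∈ G, aeval (matSub (g : Matrix (Fin 4) (Fin 4) ℝ)) p = p) ∧
      ∀ c : ℝ, p ≠ C c * sqPoly ^ 6 := by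
    rcases common_axis α β hα hβ hP with ⟨e, he⟩ | ⟨e, he⟩
    · refine exists_degree_twelve G β hβ (fun g => dot_conjPerm (R g)) fun v => ?_
      obtain ⟨Q, hQ2, hQ⟩ := exists_hopf_left e v
      refine ⟨Q, hQ2, fun y => ?_⟩
      obtain ⟨x, hx0, hx⟩ := exists_intertwiner e y
      refine ⟨toVec x, by rw [toVec_dot]; exact Quaternion.normSq_ne_zero.2 hx0, fun g => ?_⟩
      rw [hLR, hQ, toVec_dot]
      exact hopf_left_eq hx (he g)
    · refine exists_degree_twelve G α hα (fun g => dot_conjPerm (L g)) fun v => ?_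
      obtain ⟨Q, hQ2, hQ⟩ := exists_hopf_right e v
      refine ⟨Q, hQ2, fun y => ?_⟩
      obtain ⟨x, hx0, hx⟩ := exists_intertwiner y e
      refine ⟨toVec x, by rw [toVec_dot]; exact Quaternion.normSq_ne_zero.2 hx0, fun g => ?_⟩
      rw [hLR, hQ, toVec_dot]
      exact hopf_right_eq hx (he g)
  obtain ⟨q, d, h1, h2, h3, h4, h5, h6⟩ := exists_harmonic
    {M | ∃ g ∈ G, (g : Matrix (Fin 4) (Fin 4) ℝ) = M}
    (by rintro _ ⟨g, hg, rfl⟩; exact horth ⟨g, hg⟩) 5 p hp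
    (by rintro _ ⟨g, hg, rfl⟩; exact hinv g hg) hne
  exact ⟨q, d, h1, h2, h3, h4, h5, fun g hg => h6 _ ⟨g, hg, rfl⟩⟩
end

section
/- There exists a finite subgroup G of SO(4) acting freely on the unit sphere S³ ⊂ ℝ⁴ such that every G-invariant harmonic polynomial on ℝ⁴ that is homogeneous of degree d with 1 ≤ d ≤ 11 is identically zero; that is, the degree bound 12 for free S³ quotients is sharp (it is attained, e.g., by ℤ₁₃ × 2I where 2I is the binary icosahedral group). -/
/-!
The group is the binary icosahedral group `2I` of 120 unit icosians, acting on `ℝ⁴ = ℍ` by left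
multiplication. Left multiplication by `q ≠ 1` fixes no nonzero vector because `(q - 1) v = 0`
forces `v = 0`, and it has determinant `|q|⁴ = 1`.

The vanishing of invariants rests on the fact that the 120 icosians form a spherical 11-design:
`∑_{q ∈ 2I} ⟨q, z⟩ ^ d` is a constant times `|z| ^ d` for even `d ≤ 10`, and `0` for odd `d`
(`icosa_design`). Harmonicity enters through the Fischer pairing `⟨p, q⟩ = ∑ α! p_α q_α`, for
which multiplication by `X i` is adjoint to `∂ᵢ`. Hence `⟨p, ℓ_a ^ d⟩ = d! p(a)` for `p`
homogeneous of degree `d` and `ℓ_a = ∑ aᵢ Xᵢ` (`fischer_linear_pow`), while every multiple of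
`|X|²` is orthogonal to the harmonic polynomials (`fischer_normSq_mul`). Since
`⟨q x, y⟩ = ⟨q, y x̄⟩` and `|y x̄| = |x| |y|`, the design identity says that
`∑_q ℓ_{q x} ^ d` is a multiple of `|X|²` for `1 ≤ d ≤ 11` (`sum_leftMul_pow`). Pairing with `p`
gives `∑_q p(q x) = 0` (`sum_eval_icosa`), which for an invariant `p` reads `120 p(x) = 0`.

The group structure is verified by exact computation in the quaternions over `ℤ[φ]`. To avoid
denominators, the icosians are stored doubled, so that closure takes the form `a * b = c + c`.
-/

open MvPolynomial

open scoped Quaternion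

/-! ### The doubled icosians -/

/-- The ring `ℤ[φ]` with `φ² = 1 + φ`, in which equality is decidable. -/
abbrev ZPhi := QuadraticAlgebra ℤ 1 1

/-- Quaternions over `ℤ[φ]`. -/
abbrev QPhi := Quaternion ZPhi

instance : DecidableEq QPhi := fun a b =>
  decidable_of_iff (a.re = b.re ∧ a.imI = b.imI ∧ a.imJ = b.imJ ∧ a.imK = b.imK)
    (by rw [Quaternion.ext_iff])

/-- The golden ratio as an element of `ℤ[φ]`. -/
def phi : ZPhi := ⟨0, 1⟩

/-- The quaternion `a + b i + c j + d k`. -/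
def quat {R : Type*} [Zero R] [One R] [Neg R] (a b c d : R) : Quaternion R := ⟨a, b, c, d⟩

section quat

variable {R : Type*} [Zero R] [One R] [Neg R] (a b c d : R)

@[simp] theorem re_quat : (quat a b c d).re = a := rfl

@[simp] theorem imI_quat : (quat a b c d).imI = b := rfl

@[simp] theorem imJ_quat : (quat a b c d).imJ = c := rfl

@[simp] theorem imK_quat : (quat a b c d).imK = d := rfl

end quat

/-- The two signs, as elements of `ℤ[φ]`. -/
def signs : List ZPhi := [1, -1]

/-- The quaternions whose coordinates are the twelve even permutations of `(a, b, c, d)`. -/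
def evenPerms (a b c d : ZPhi) : List QPhi :=
  [quat a b c d, quat a c d b, quat a d b c, quat b a d c, quat b d c a, quat b c a d,
   quat c a b d, quat c b d a, quat c d a b, quat d a c b, quat d c b a, quat d b a c]

/-- Twice the 24 elements of the binary tetrahedral group: `±2, ±2i, ±2j, ±2k` and
`±1 ± i ± j ± k`. -/
def tetra : List QPhi :=
  signs.flatMap (fun s =>
    [quat (2 * s) 0 0 0, quat 0 (2 * s) 0 0, quat 0 0 (2 * s) 0, quat 0 0 0 (2 * s)]) ++
  signs.flatMap (fun s => signs.flatMap fun t => signs.flatMap fun u =>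
    signs.map fun v => quat s t u v)

/-- Twice the 120 elements of the binary icosahedral group: those of `tetra` and the even
permutations of `(±φ, ±1, ±φ⁻¹, 0)`, where `φ⁻¹ = φ - 1`. -/
def icosa : List QPhi :=
  tetra ++ signs.flatMap (fun s => signs.flatMap fun t => signs.flatMap fun u =>
    evenPerms (s * phi) t (u * (phi - 1)) 0)

/-! ### Closure under multiplication -/

/-- Left multiplication by `a / 2` maps the icosians to icosians; for `a = 2u` and `b = 2v` the
equation `a * b = c + c` says that `c = 2(uv)`. -/
def Translates (a : QPhi) : Prop := ∀ b ∈ icosa, ∃ c ∈ icosa, a * b = c + c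

/-- If `a / 2` and `b / 2` preserve the icosians, so does their product `e / 2`. This spreads the
closure property from generators to the group without checking all 120² products. -/
theorem Translates.half_mul {a b e : QPhi} (ha : Translates a) (hb : Translates b)
    (h : a * b = e + e) : Translates e := by
  intro x hx
  obtain ⟨y, hy, hxy⟩ := hb x hx
  obtain ⟨w, hw, hyw⟩ := ha y hy
  refine ⟨w, hw, ?_⟩
  have h2 : e * x + e * x = (w + w) + (w + w) := by
    rw [← add_mul, ← h, mul_assoc, hxy, mul_add, hyw]
  rw [Quaternion.ext_iff] at h2 ⊢
  simp only [QuadraticAlgebra.ext_iff, Quaternion.re_add, Quaternion.imI_add, Quaternion.imJ_add,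
    Quaternion.imK_add, QuadraticAlgebra.re_add, QuadraticAlgebra.im_add] at h2 ⊢
  omega

/-- Twice the unit `i`. -/
def qI : QPhi := quat 0 2 0 0

/-- Twice the unit `(1 + i + j + k) / 2` of order 6. -/
def qOmega : QPhi := quat 1 1 1 1

/-- Twice an icosian of order 10, lying outside the binary tetrahedral group. -/
def qC : QPhi := quat phi 1 (phi - 1) 0

/-- Some products of at most two of the generators `qI`, `qOmega`, `qC` (all doubled). -/
def genPairs : List QPhi :=
  [2, -2, qI, qOmega, qC, quat (-1) 1 1 1, quat (phi - 1) phi 1 0]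

/-- Twice the elements of the cyclic group of order 6 generated by `(1 + i + j + k) / 2`. -/
def factorsOmega : List QPhi :=
  [2, -2, qOmega, -qOmega, quat (-1) 1 1 1, quat 1 (-1) (-1) (-1)]

/-- Twice a set of representatives of the four right cosets, in the binary tetrahedral group, of
the cyclic group of `factorsOmega`. -/
def factorsI : List QPhi := [2, qI, quat (-1) 1 (-1) 1, quat (-1) (-1) (-1) 1]

/-- Twice a set of representatives of the five right cosets of the binary tetrahedral group in the
binary icosahedral group. -/
def factorsC : List QPhi :=
  [2, qC, quat (phi - 1) phi 1 0, quat (1 - phi) phi 1 0, quat (-phi) 1 (phi - 1) 0]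

theorem translates_gens : ∀ a ∈ [qI, qOmega, qC], Translates a := by
  unfold Translates
  decide +kernel

theorem translates_of_factors {X Y Z : List QPhi} (hX : ∀ a ∈ X, Translates a)
    (hY : ∀ a ∈ Y, Translates a) (h : ∀ e ∈ Z, ∃ a ∈ X, ∃ b ∈ Y, a * b = e + e) :
    ∀ e ∈ Z, Translates e := by
  intro e he
  obtain ⟨a, ha, b, hb, hab⟩ := h e he
  exact (hX a ha).half_mul (hY b hb) hab

/-- The icosians are closed under multiplication. The 120 elements are reached from the three
generators through the factorization cyclic group of order 6, then `2T`, then `2I`. -/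
theorem translates_icosa : ∀ a ∈ icosa, Translates a := by
  have h2 : Translates 2 := fun b hb => ⟨b, hb, two_mul b⟩
  have g0 : ∀ a ∈ [2, qI, qOmega, qC], Translates a := by
    rintro a (_ | ⟨_, ha⟩)
    exacts [h2, translates_gens a ha]
  have g1 : ∀ a ∈ genPairs, Translates a := translates_of_factors g0 g0 (by decide +kernel)
  have gO : ∀ a ∈ factorsOmega, Translates a := translates_of_factors g1 g1 (by decide +kernel)
  have gI : ∀ a ∈ factorsI, Translates a := translates_of_factors g1 g1 (by decide +kernel)
  have gC : ∀ a ∈ factorsC, Translates a := translates_of_factors g1 g1 (by decide +kernel)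
  have gT : ∀ a ∈ tetra, Translates a := translates_of_factors gO gI (by decide +kernel)
  exact translates_of_factors gT gC (by decide +kernel)

theorem star_mem_icosa : ∀ a ∈ icosa, star a ∈ icosa := by decide +kernel

theorem mul_star_icosa : ∀ a ∈ icosa, a * star a = 4 := by decide +kernel

theorem two_mem_icosa : 2 ∈ icosa := by decide +kernel

/-! ### The design identity -/

theorem golden_mul : Real.goldenRatio * Real.goldenRatio =
    (1 : ℤ) • (1 : ℝ) + (1 : ℤ) • Real.goldenRatio := by
  simp only [one_smul]
  linarith [Real.goldenRatio_sq]

/-- The embedding `ℤ[φ] → ℝ`. -/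
noncomputable def toReal : ZPhi →ₐ[ℤ] ℝ := QuadraticAlgebra.lift ⟨Real.goldenRatio, golden_mul⟩

theorem toReal_phi : toReal phi = Real.goldenRatio := by
  simp [toReal, phi, QuadraticAlgebra.lift]

/-- The Euclidean inner product of the real image of `q` with `z`. -/
noncomputable def dotR (q : QPhi) (z : Fin 4 → ℝ) : ℝ :=
  toReal q.re * z 0 + toReal q.imI * z 1 + toReal q.imJ * z 2 + toReal q.imK * z 3

theorem dotR_quat (a b c d : ZPhi) (z : Fin 4 → ℝ) :
    dotR (quat a b c d) z = toReal a * z 0 + toReal b * z 1 + toReal c * z 2 + toReal d * z 3 := rfl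

/-- The sum of `P (± x ± y ± z)` over the eight choices of signs. -/
def signSum (P : ℝ → ℝ) (x y z : ℝ) : ℝ :=
  P (x + y + z) + P (x + y - z) + P (x - y + z) + P (x - y - z) +
  (P (-x + y + z) + P (-x + y - z) + P (-x - y + z) + P (-x - y - z))

theorem sum_signs (f : ZPhi → List QPhi) (g : QPhi → ℝ) :
   ((signs.flatMap f).map g).sum = ((f 1).map g).sum + ((f (-1)).map g).sum := by
  simp [signs]

/-- The sum of `P ⟨q, z⟩` over the doubled icosians, arranged in sign orbits. The values
`φ z i` and `φ⁻¹ z i` are named by variables so that they stay atomic while the list is expanded. -/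
theorem sum_icosa (P : ℝ → ℝ) (z : Fin 4 → ℝ) (a b c d A B C D A' B' C' D' : ℝ)
    (ha : z 0 = a) (hb : z 1 = b) (hc : z 2 = c) (hd : z 3 = d)
    (hA : Real.goldenRatio * a = A) (hB : Real.goldenRatio * b = B)
    (hC : Real.goldenRatio * c = C) (hD : Real.goldenRatio * d = D)
    (hA' : (Real.goldenRatio - 1) * a = A') (hB' : (Real.goldenRatio - 1) * b = B')
    (hC' : (Real.goldenRatio - 1) * c = C') (hD' : (Real.goldenRatio - 1) * d = D') :
    (icosa.map fun q => P (dotR q z)).sum =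
      P (2 * a) + P (-2 * a) + (P (2 * b) + P (-2 * b)) +
      (P (2 * c) + P (-2 * c)) + (P (2 * d) + P (-2 * d)) +
      (signSum P (a + b) c d + signSum P (a - b) c d) +
      (signSum P A b C' + signSum P A c D' + signSum P A d B' +
       signSum P B a D' + signSum P B d C' + signSum P B c A' +
       signSum P C b D' + signSum P C d A' + signSum P C a B' +
       signSum P D a C' + signSum P D c B' + signSum P D b A') := by
  simp only [icosa, tetra, List.map_append, List.sum_append, sum_signs]
  simp only [signs, evenPerms, List.map_cons, List.map_nil, List.sum_cons, List.sum_nil, dotR_quat,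
    map_neg, map_one, map_sub, map_zero, map_ofNat, toReal_phi, ha, hb, hc, hd,
    one_mul, mul_one, zero_mul, zero_add, add_zero, neg_mul, mul_neg, hA, hB, hC, hD,
    hA', hB', hC', hD', signSum]
  ring_nf

/-- For `1 ≤ k ≤ 5`, the sum of `(± x ± y ± z) ^ (2 * k)` over all signs, written as a polynomial in
the squares of the three variables; zero for other `k`. -/
def evenPart : ℕ → ℝ → ℝ → ℝ → ℝ
  | 1, x, y, z => 8 * (x + y + z)
  | 2, x, y, z => 8 * (x ^ 2 + 6 * x * y + 6 * x * z + y ^ 2 + 6 * y * z + z ^ 2)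
  | 3, x, y, z => 8 * (x ^ 3 + 15 * x ^ 2 * y + 15 * x ^ 2 * z + 15 * x * y ^ 2 + 90 * x * y * z +
      15 * x * z ^ 2 + y ^ 3 + 15 * y ^ 2 * z + 15 * y * z ^ 2 + z ^ 3)
  | 4, x, y, z => 8 * (x ^ 4 + 28 * x ^ 3 * y + 28 * x ^ 3 * z + 70 * x ^ 2 * y ^ 2 + 420 * x ^ 2
      * y * z + 70 * x ^ 2 * z ^ 2 + 28 * x * y ^ 3 + 420 * x * y ^ 2 * z + 420 * x * y * z ^ 2 +
      28 * x * z ^ 3 + y ^ 4 + 28 * y ^ 3 * z + 70 * y ^ 2 * z ^ 2 + 28 * y * z ^ 3 + z ^ 4)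
  | 5, x, y, z => 8 * (x ^ 5 + 45 * x ^ 4 * y + 45 * x ^ 4 * z + 210 * x ^ 3 * y ^ 2 + 1260 * x ^
      3 * y * z + 210 * x ^ 3 * z ^ 2 + 210 * x ^ 2 * y ^ 3 + 3150 * x ^ 2 * y ^ 2 * z + 3150 * x
      ^ 2 * y * z ^ 2 + 210 * x ^ 2 * z ^ 3 + 45 * x * y ^ 4 + 1260 * x * y ^ 3 * z + 3150 * x * y
      ^ 2 * z ^ 2 + 1260 * x * y * z ^ 3 + 45 * x * z ^ 4 + y ^ 5 + 45 * y ^ 4 * z + 210 * y ^ 3 *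
      z ^ 2 + 210 * y ^ 2 * z ^ 3 + 45 * y * z ^ 4 + z ^ 5)
  | _, _, _, _ => 0

theorem signSum_even (k : ℕ) (h1k : 1 ≤ k) (hk : k ≤ 5) (x y z : ℝ) :
    signSum (fun t => t ^ (2 * k)) x y z = evenPart k (x ^ 2) (y ^ 2) (z ^ 2) := by
  interval_cases k <;>
    simp only [signSum, evenPart] <;> ring

theorem signSum_odd (d : ℕ) (hd : Odd d) (x y z : ℝ) : signSum (fun t => t ^ d) x y z = 0 := by
  have h1 : -x - y - z = -(x + y + z) := by ring
  have h2 : -x - y + z = -(x + y - z) := by ring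
  have h3 : -x + y - z = -(x - y + z) := by ring
  have h4 : -x + y + z = -(x - y - z) := by ring
  simp only [signSum, h1, h2, h3, h4, hd.neg_pow]
  ring

set_option maxRecDepth 100000 in
set_option maxHeartbeats 2000000 in
/-- The even moments of the doubled icosians up to degree 10 are those of the sphere of radius 2:
the mean of `⟨q, z⟩ ^ (2 * k)` over that sphere is `catalan k * |z| ^ (2 * k)`. -/
theorem icosa_even_design (k : ℕ) (h1k : 1 ≤ k) (hk : k ≤ 5) (z : Fin 4 → ℝ) :
    (icosa.map fun q => dotR q z ^ (2 * k)).sum =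
      120 * catalan k * (z 0 ^ 2 + z 1 ^ 2 + z 2 ^ 2 + z 3 ^ 2) ^ k := by
  rw [sum_icosa (fun t => t ^ (2 * k)) z _ _ _ _ _ _ _ _ _ _ _ _
    rfl rfl rfl rfl rfl rfl rfl rfl rfl rfl rfl rfl]
  have h1 : Real.goldenRatio ^ 2 = Real.goldenRatio + 1 := Real.goldenRatio_sq
  generalize Real.goldenRatio = g at *
  have h2 : (g - 1) ^ 2 = 2 - g := by linear_combination h1
  have h3 : g ^ 3 = 2 * g + 1 := by linear_combination (g + 1) * h1
  have h4 : g ^ 4 = 3 * g + 2 := by linear_combination g * h3 + 2 * h1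
  -- After squaring, only powers of `g` up to the fourth survive, and these are linear in `g`.
  simp only [signSum_even k h1k hk]
  simp only [mul_pow _ _ 2, h1, h2]
  obtain ⟨c1, c2, c3, c4, c5⟩ : catalan 1 = 1 ∧ catalan 2 = 2 ∧ catalan 3 = 5 ∧
      catalan 4 = 14 ∧ catalan 5 = 42 := by
    simp [catalan_eq_centralBinom_div, Nat.centralBinom, Nat.choose]
  interval_cases k
  · simp only [evenPart, c1, Nat.cast_one]
    ring
  · simp only [evenPart, c2, Nat.cast_ofNat]
    ring_nf
    simp only [h1]
    ring
  · simp only [evenPart, c3, Nat.cast_ofNat]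
    ring_nf
    simp only [h1]
    ring
  · simp only [evenPart, c4, Nat.cast_ofNat]
    ring_nf
    simp only [h1, h3, h4]
    ring
  · simp only [evenPart, c5, Nat.cast_ofNat]
    ring_nf
    simp only [h1, h3, h4]
    ring

/-- The icosians form a spherical 11-design. The exponent `k + 1` records that the right side is
divisible by `|z|²`; in odd degree the constant is `0`. -/
theorem icosa_design (d : ℕ) (h1 : 1 ≤ d) (h11 : d ≤ 11) :
    ∃ (c : ℝ) (k : ℕ), ∀ z : Fin 4 → ℝ, (icosa.map fun q => dotR q z ^ d).sum =
      c * (z 0 ^ 2 + z 1 ^ 2 + z 2 ^ 2 + z 3 ^ 2) ^ (k + 1) := by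
  rcases Nat.even_or_odd d with ⟨k, hk⟩ | hd
  · refine ⟨120 * catalan k, k - 1, fun z => ?_⟩
    rw [Nat.sub_add_cancel (by omega), ← icosa_even_design k (by omega) (by omega), hk, two_mul]
  · refine ⟨0, 0, fun z => ?_⟩
    rw [sum_icosa (fun t => t ^ d) z _ _ _ _ _ _ _ _ _ _ _ _
      rfl rfl rfl rfl rfl rfl rfl rfl rfl rfl rfl rfl]
    simp only [signSum_odd d hd, neg_mul, hd.neg_pow]
    ring

/-! ### The icosians acting on `ℝ⁴` -/

/-- The unit real quaternion `q / 2` represented by a doubled icosian `q`. -/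
noncomputable def halfReal (q : QPhi) : Quaternion ℝ :=
  quat (toReal q.re / 2) (toReal q.imI / 2) (toReal q.imJ / 2) (toReal q.imK / 2)

theorem halfReal_mul {a b c : QPhi} (h : a * b = c + c) :
    halfReal a * halfReal b = halfReal c := by
  rw [Quaternion.ext_iff] at h
  obtain ⟨h0, h1, h2, h3⟩ := h
  apply_fun toReal at h0 h1 h2 h3
  simp only [Quaternion.re_mul, Quaternion.imI_mul, Quaternion.imJ_mul, Quaternion.imK_mul,
    Quaternion.re_add, Quaternion.imI_add, Quaternion.imJ_add, Quaternion.imK_add, map_add,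
    map_sub, map_mul] at h0 h1 h2 h3
  ext <;> simp only [halfReal, Quaternion.re_mul, Quaternion.imI_mul, Quaternion.imJ_mul,
    Quaternion.imK_mul, re_quat, imI_quat, imJ_quat, imK_quat]
  · linear_combination h0 / 4
  · linear_combination h1 / 4
  · linear_combination h2 / 4
  · linear_combination h3 / 4

theorem halfReal_star (a : QPhi) : halfReal (star a) = star (halfReal a) := by
  ext <;> simp [halfReal, neg_div]

theorem halfReal_two : halfReal 2 = 1 := by
  have h : (2 : QPhi) = quat 2 0 0 0 := by decide +kernel
  rw [h]
  ext <;> simp [halfReal, map_ofNat toReal 2]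

theorem halfReal_mul_star {a : QPhi} (ha : a ∈ icosa) :
    halfReal a * star (halfReal a) = 1 := by
  rw [← halfReal_star, ← halfReal_two]
  refine halfReal_mul ?_
  rw [mul_star_icosa a ha]
  norm_num

/-- The matrix of left multiplication by `q` on `ℍ = ℝ⁴` in the basis `1, i, j, k`. -/
def leftMul (q : Quaternion ℝ) : Matrix (Fin 4) (Fin 4) ℝ :=
  !![q.re, -q.imI, -q.imJ, -q.imK;
     q.imI, q.re, -q.imK, q.imJ;
     q.imJ, q.imK, q.re, -q.imI;
     q.imK, -q.imJ, q.imI, q.re]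

theorem leftMul_mul (q r : Quaternion ℝ) : leftMul (q * r) = leftMul q * leftMul r := by
  ext i j
  fin_cases i <;> fin_cases j <;>
    simp [leftMul, Matrix.mul_apply, Fin.sum_univ_four] <;> ring

theorem leftMul_one : leftMul 1 = 1 := by
  ext i j
  fin_cases i <;> fin_cases j <;> simp [leftMul]

theorem leftMul_star (q : Quaternion ℝ) : leftMul (star q) = star (leftMul q) := by
  ext i j
  fin_cases i <;> fin_cases j <;> simp [leftMul, Matrix.star_apply]

theorem det_leftMul (q : Quaternion ℝ) : (leftMul q).det = (q * star q).re ^ 2 := by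
  simp [leftMul, Matrix.det_succ_row_zero, Fin.sum_univ_succ, Fin.succAbove]
  ring

/-- Freeness: a fixed vector satisfies `(q - 1) * v = 0`, and `ℍ` has no zero divisors. -/
theorem leftMul_free {q : Quaternion ℝ} (hq : q ≠ 1) {v : Fin 4 → ℝ}
    (h : (leftMul q).mulVec v = v) : v = 0 := by
  have hmul : (q - 1) * quat (v 0) (v 1) (v 2) (v 3) = 0 := by
    have h0 := congrFun h 0
    have h1 := congrFun h 1
    have h2 := congrFun h 2
    have h3 := congrFun h 3
    simp only [leftMul, Matrix.mulVec, dotProduct, Fin.sum_univ_four, Matrix.of_apply,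
      Matrix.cons_val] at h0 h1 h2 h3
    ext <;> simp
    · linear_combination h0
    · linear_combination h1
    · linear_combination h2
    · linear_combination h3
  have hv := (mul_eq_zero.1 hmul).resolve_left (sub_ne_zero.2 hq)
  rw [Quaternion.ext_iff] at hv
  simp at hv
  ext i
  fin_cases i <;> simp [hv]

/-- The binary icosahedral group, embedded in `O(4)` by left multiplication. -/
noncomputable def icosaGroup : Subgroup (Matrix.orthogonalGroup (Fin 4) ℝ) where
  carrier := {g | ∃ q ∈ icosa, (g : Matrix (Fin 4) (Fin 4) ℝ) = leftMul (halfReal q)}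
  one_mem' := ⟨2, two_mem_icosa, by rw [halfReal_two, leftMul_one]; rfl⟩
  mul_mem' := by
    rintro g h ⟨a, ha, hga⟩ ⟨b, hb, hhb⟩
    obtain ⟨c, hc, habc⟩ := translates_icosa a ha b hb
    refine ⟨c, hc, ?_⟩
    rw [← halfReal_mul habc, leftMul_mul, ← hga, ← hhb]
    rfl
  inv_mem' := by
    rintro g ⟨a, ha, hga⟩
    refine ⟨star a, star_mem_icosa a ha, ?_⟩
    rw [halfReal_star, leftMul_star, ← hga]
    rfl

theorem leftMul_mem_orthogonal {q : QPhi} (hq : q ∈ icosa) :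
    leftMul (halfReal q) ∈ Matrix.orthogonalGroup (Fin 4) ℝ := by
  rw [Matrix.mem_orthogonalGroup_iff, ← Matrix.conjTranspose_eq_transpose_of_trivial,
    ← Matrix.star_eq_conjTranspose, ← leftMul_star, ← leftMul_mul, halfReal_mul_star hq,
    leftMul_one]

theorem finite_icosaGroup : Finite icosaGroup := by
  have hfin : (leftMul ∘ halfReal '' {q | q ∈ icosa}).Finite :=
    (List.finite_toSet icosa).image _
  refine Set.Finite.to_subtype
    (Set.Finite.of_finite_image (f := Subtype.val) (hfin.subset ?_) Subtype.val_injective.injOn)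
  rintro _ ⟨g, ⟨q, hq, hg⟩, rfl⟩
  exact ⟨q, hq, hg.symm⟩

/-! ### The Fischer pairing -/

/-- The Fischer pairing `⟨p, q⟩ = ∑ α! p_α q_α` on polynomials in four variables. -/
noncomputable def fischer :
    MvPolynomial (Fin 4) ℝ →ₗ[ℝ] MvPolynomial (Fin 4) ℝ →ₗ[ℝ] ℝ :=
  (basisMonomials (Fin 4) ℝ).constr ℝ
    (fun α => ((∏ i, (α i).factorial : ℕ) : ℝ) • lcoeff ℝ α)

theorem fischer_monomial (α : Fin 4 →₀ ℕ) (a : ℝ) (q : MvPolynomial (Fin 4) ℝ) :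
    fischer (monomial α a) q = a * ((∏ i, (α i).factorial : ℕ) : ℝ) * coeff α q := by
  have h : monomial α a = a • basisMonomials (Fin 4) ℝ α := by
    simp [smul_monomial]
  rw [h, map_smul, fischer, Module.Basis.constr_basis]
  simp [mul_assoc]

/-- Multiplication by `X i` is adjoint to `∂ᵢ`. -/
theorem fischer_X_mul (i : Fin 4) (p q : MvPolynomial (Fin 4) ℝ) :
    fischer p (X i * q) = fischer (pderiv i p) q := by
  induction p using MvPolynomial.induction_on' with
  | add p₁ p₂ h₁ h₂ => simp only [map_add, LinearMap.add_apply, h₁, h₂]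
  | monomial α a =>
    rw [pderiv_monomial, fischer_monomial, fischer_monomial, coeff_X_mul']
    by_cases hi : α i = 0
    · simp [hi]
    · have hprod : (∏ j, (α j).factorial) =
          α i * ∏ j, ((α - Finsupp.single i 1 : Fin 4 →₀ ℕ) j).factorial := by
        rw [← Finset.mul_prod_erase _ _ (Finset.mem_univ i),
          ← Finset.mul_prod_erase _ (fun j => ((α - Finsupp.single i 1 : Fin 4 →₀ ℕ) j).factorial)
            (Finset.mem_univ i), ← mul_assoc]
        congr 1
        · simp [Nat.mul_factorial_pred hi]
        · refine Finset.prod_congr rfl fun j hj => ?_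
          simp [Finsupp.single_eq_of_ne (Finset.ne_of_mem_erase hj)]
      rw [if_pos (Finsupp.mem_support_iff.2 hi), hprod]
      push_cast
      ring

/-- Powers of linear forms reproduce point evaluation on homogeneous polynomials; the induction
step is Euler's identity. -/
theorem fischer_linear_pow (a : Fin 4 → ℝ) (d : ℕ) (p : MvPolynomial (Fin 4) ℝ)
    (hp : p.IsHomogeneous d) :
    fischer p ((∑ i, C (a i) * X i) ^ d) = d.factorial * eval a p := by
  induction d generalizing p with
  | zero =>
    obtain ⟨c, rfl⟩ : ∃ c, p = C c :=
      ⟨_, totalDegree_eq_zero_iff_eq_C.1 (Nat.le_zero.1 hp.totalDegree_le)⟩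
    rw [pow_zero, C_apply, fischer_monomial]
    simp
  | succ d ih =>
    have h1 : fischer p ((∑ i, C (a i) * X i) ^ (d + 1)) =
        ∑ i, a i * fischer (pderiv i p) ((∑ i, C (a i) * X i) ^ d) := by
      rw [pow_succ', Finset.sum_mul, map_sum]
      refine Finset.sum_congr rfl fun i _ => ?_
      rw [mul_assoc, ← smul_eq_C_mul, map_smul, fischer_X_mul, smul_eq_mul]
    have h2 := congrArg (eval a) hp.sum_X_mul_pderiv
    simp only [map_sum, map_mul, eval_X, map_nsmul] at h2
    rw [h1]
    simp only [fun i => ih (pderiv i p) hp.pderiv]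
    rw [Nat.factorial_succ]
    push_cast
    simp only [nsmul_eq_mul] at h2
    push_cast at h2
    rw [mul_assoc, mul_left_comm, ← h2, Finset.mul_sum]
    exact Finset.sum_congr rfl fun i _ => by ring

/-- Harmonic polynomials are orthogonal to multiples of `|X|²`, which is adjoint to the Laplacian. -/
theorem fischer_normSq_mul (p q : MvPolynomial (Fin 4) ℝ) (hp : polyLap p = 0) :
    fischer p ((∑ i, X i ^ 2) * q) = 0 := by
  have : fischer p ((∑ i, X i ^ 2) * q) = fischer (polyLap p) q := by
    simp only [polyLap, Finset.sum_mul, map_sum, LinearMap.sum_apply, pow_two, mul_assoc,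
      fischer_X_mul]
  rw [this, hp, map_zero, LinearMap.zero_apply]

/-! ### Averaging over the group -/

theorem eval_aeval_matSub (g : Matrix (Fin 4) (Fin 4) ℝ) (p : MvPolynomial (Fin 4) ℝ)
    (x : Fin 4 → ℝ) : eval x (aeval (matSub g) p) = eval (g.mulVec x) p := by
  have h : (fun i => eval x (matSub g i)) = g.mulVec x := by
    ext i
    simp [matSub, Matrix.mulVec, dotProduct]
  rw [← h]
  induction p using MvPolynomial.induction_on with
  | C a => simp
  | add p q hp hq => simp only [map_add, hp, hq]
  | mul_X p i hp => simp only [map_mul, hp, aeval_X, eval_X]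

/-- A design identity in degree `d` makes `∑_q ℓ_{q x} ^ d` a multiple of `|X|²`. -/
theorem sum_leftMul_pow (d k : ℕ) (c : ℝ)
    (h : ∀ z : Fin 4 → ℝ, (icosa.map fun q => dotR q z ^ d).sum =
      c * (z 0 ^ 2 + z 1 ^ 2 + z 2 ^ 2 + z 3 ^ 2) ^ (k + 1)) (x : Fin 4 → ℝ) :
    (icosa.map fun q =>
      (∑ i, C ((leftMul (halfReal q)).mulVec x i) * X i : MvPolynomial (Fin 4) ℝ) ^ d).sum =
      (∑ i, X i ^ 2) * (C (c / 2 ^ d * (∑ i, x i ^ 2) ^ (k + 1)) * (∑ i, X i ^ 2) ^ k) := by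
  refine MvPolynomial.funext fun y => ?_
  -- The vector is the quaternion `y x̄`, for which `⟨q x, y⟩ = ⟨q, y x̄⟩`.
  have hz := h ![x 0 * y 0 + x 1 * y 1 + x 2 * y 2 + x 3 * y 3,
    -x 1 * y 0 + x 0 * y 1 - x 3 * y 2 + x 2 * y 3,
    -x 2 * y 0 + x 3 * y 1 + x 0 * y 2 - x 1 * y 3,
    -x 3 * y 0 - x 2 * y 1 + x 1 * y 2 + x 0 * y 3]
  have hterm : ∀ q : QPhi, eval y ((∑ i, C ((leftMul (halfReal q)).mulVec x i) * X i :
      MvPolynomial (Fin 4) ℝ) ^ d) = (1 / 2 ^ d) *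
      dotR q ![x 0 * y 0 + x 1 * y 1 + x 2 * y 2 + x 3 * y 3,
        -x 1 * y 0 + x 0 * y 1 - x 3 * y 2 + x 2 * y 3,
        -x 2 * y 0 + x 3 * y 1 + x 0 * y 2 - x 1 * y 3,
        -x 3 * y 0 - x 2 * y 1 + x 1 * y 2 + x 0 * y 3] ^ d := by
    intro q
    rw [← one_div_pow, ← mul_pow, map_pow]
    congr 1
    simp [dotR, leftMul, halfReal, Matrix.mulVec, dotProduct, Fin.sum_univ_four]
    ring
  rw [map_list_sum, List.map_map]
  simp only [Function.comp_def, hterm]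
  rw [List.sum_map_mul_left, hz]
  simp only [map_mul, map_pow, map_add, eval_C, eval_X, Fin.sum_univ_four, Matrix.cons_val]
  -- Multiplicativity of the quaternion norm, `|y x̄|² = |x|² |y|²`.
  have hnorm : (x 0 * y 0 + x 1 * y 1 + x 2 * y 2 + x 3 * y 3) ^ 2 +
      (-x 1 * y 0 + x 0 * y 1 - x 3 * y 2 + x 2 * y 3) ^ 2 +
      (-x 2 * y 0 + x 3 * y 1 + x 0 * y 2 - x 1 * y 3) ^ 2 +
      (-x 3 * y 0 - x 2 * y 1 + x 1 * y 2 + x 0 * y 3) ^ 2 =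
      (x 0 ^ 2 + x 1 ^ 2 + x 2 ^ 2 + x 3 ^ 2) * (y 0 ^ 2 + y 1 ^ 2 + y 2 ^ 2 + y 3 ^ 2) := by
    ring
  rw [hnorm, mul_pow]
  ring

/-- A harmonic polynomial, homogeneous of degree between 1 and 11, has average zero over every
orbit of the binary icosahedral group. -/
theorem sum_eval_icosa (p : MvPolynomial (Fin 4) ℝ) (d : ℕ) (h1 : 1 ≤ d) (h11 : d ≤ 11)
    (hp : p.IsHomogeneous d) (hh : IsHarmonic p) (x : Fin 4 → ℝ) :
    (icosa.map fun q => eval ((leftMul (halfReal q)).mulVec x) p).sum = 0 := by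
  obtain ⟨c, k, h⟩ := icosa_design d h1 h11
  have key := congrArg (fischer p) (sum_leftMul_pow d k c h x)
  rw [fischer_normSq_mul _ _ hh, map_list_sum, List.map_map] at key
  simp only [Function.comp_def, fischer_linear_pow _ d p hp] at key
  rw [List.sum_map_mul_left] at key
  exact (mul_eq_zero.1 key).resolve_left (by positivity)

/-- There exists a finite subgroup `G` of `SO(4)` (a subgroup of the orthogonal group all of
whose elements have determinant one) acting freely on the unit sphere `S³ ⊂ ℝ⁴` such that every
`G`-invariant harmonic polynomial on `ℝ⁴` homogeneous of degree `d` with `1 ≤ d ≤ 11` vanishes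
identically: the degree bound `12` for free `S³` quotients is sharp (attained e.g. by
`ℤ₁₃ × 2I`). -/
theorem free_quotient_S3_bound_sharp :
    ∃ G : Subgroup (Matrix.orthogonalGroup (Fin 4) ℝ), Finite G ∧
      (∀ g ∈ G, ((g : Matrix (Fin 4) (Fin 4) ℝ)).det = 1) ∧
      (∀ g ∈ G, g ≠ 1 → ∀ v : Fin 4 → ℝ,
        Matrix.mulVec (g : Matrix (Fin 4) (Fin 4) ℝ) v = v → v = 0) ∧
      (∀ (p : MvPolynomial (Fin 4) ℝ) (d : ℕ), 1 ≤ d → d ≤ 11 →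
        p.IsHomogeneous d → IsHarmonic p →
        (∀ g ∈ G, aeval (matSub (g : Matrix (Fin 4) (Fin 4) ℝ)) p = p) →
        p = 0) := by
  refine ⟨icosaGroup, finite_icosaGroup, ?_, ?_, ?_⟩
  · rintro g ⟨q, hq, hg⟩
    rw [hg, det_leftMul, halfReal_mul_star hq]
    simp
  · rintro g ⟨q, hq, hg⟩ hg1 v hv
    rw [hg] at hv
    refine leftMul_free (fun h => hg1 ?_) hv
    apply Subtype.ext
    rw [hg, h, leftMul_one]
    rfl
  · intro p d h1 h11 hp hh hinv
    refine MvPolynomial.funext fun x => ?_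
    have havg : (icosa.map fun q => eval ((leftMul (halfReal q)).mulVec x) p) =
        icosa.map fun _ => eval x p := by
      refine List.map_congr_left fun q hq => ?_
      rw [← eval_aeval_matSub,
        hinv ⟨leftMul (halfReal q), leftMul_mem_orthogonal hq⟩ ⟨q, hq, rfl⟩]
    have hsum := sum_eval_icosa p d h1 h11 hp hh x
    have hlen : icosa.length = 120 := by decide +kernel
    rw [havg, List.map_const', List.sum_replicate, hlen] at hsum
    simpa using hsum
end
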